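/- arXiv:2202.10742 — 5 statements merged into one kernel-verified Lean document; each statement's English description precedes it below -/
import Mathlib

section
/- Let t > 0. For every bounded continuous function f : ℝ^d → ℝ, the sums ∑_{v∈ℤ^d} ω^{∗⌊t/ε²⌋}(v) f(εv) converge, as ε → 0⁺, to ∫_{ℝ^d} f(y) (2πt)^{−d/2} (det Q)^{−1/2} exp(−⟨y, Q⁻¹y⟩/(2t)) dy. (Weak convergence of simple gossip on ℤ^d to the fundamental solution of the anisotropic heat equation; lattice central limit theorem.) -/
open MeasureTheory Matrix Filter Topology Real

noncomputable section

def latticeConv {d : ℕ} (ω x : (Fin d → ℤ) → ℝ) : (Fin d → ℤ) → ℝ :=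
  fun v => ∑' η : Fin d → ℤ, ω (v - η) * x η

def covQ (d : ℕ) (ω : (Fin d → ℤ) → ℝ) : Matrix (Fin d) (Fin d) ℝ :=
  Matrix.of fun i j => ∑' v : Fin d → ℤ, ω v * (v i : ℝ) * (v j : ℝ)

def ftOmega {d : ℕ} (ω : (Fin d → ℤ) → ℝ) (ξ : Fin d → ℝ) : ℂ :=
  ∑' v : Fin d → ℤ, (ω v : ℂ) * Complex.exp (Complex.I * ((∑ i, ξ i * (v i : ℝ) : ℝ) : ℂ))

def aCoef0 (d : ℕ) : ℝ := ((d : ℝ) + 4) / (2 * (2 + (d : ℝ)))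
def bCoef0 (d : ℕ) : ℝ := (d : ℝ) / (2 * (2 + (d : ℝ)))
def aCoef (d n : ℕ) : ℝ :=
  (2 * (n : ℝ) + (d : ℝ)/2 + 1) * (2 * (n : ℝ) + (d : ℝ)/2 + 2) / (2 * ((n : ℝ) + 1 + (d : ℝ)/2)^2)
def bCoef (d n : ℕ) : ℝ :=
  (d : ℝ)^2 * (2 * (n : ℝ) + (d : ℝ)/2 + 1) / (8 * ((n : ℝ) + 1 + (d : ℝ)/2)^2 * (2 * (n : ℝ) + (d : ℝ)/2))
def cCoef (d n : ℕ) : ℝ :=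
  (n : ℝ)^2 * (2 * (n : ℝ) + (d : ℝ)/2 + 2) / (((n : ℝ) + 1 + (d : ℝ)/2)^2 * (2 * (n : ℝ) + (d : ℝ)/2))

def besselJ (ν z : ℝ) : ℝ :=
  ∑' m : ℕ, ((-1 : ℝ)^m / ((m.factorial : ℝ) * Real.Gamma ((m : ℝ) + ν + 1))) * (z / 2) ^ (2 * (m : ℝ) + ν)

def jacobiP (α β : ℝ) (n : ℕ) (x : ℝ) : ℝ :=
  ∑ s ∈ Finset.range (n + 1),
    (Real.Gamma ((n : ℝ) + α + 1) / (Real.Gamma (α + (s : ℝ) + 1) * ((n - s).factorial : ℝ))) *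
    (Real.Gamma ((n : ℝ) + β + 1) / (Real.Gamma ((n : ℝ) + β - (s : ℝ) + 1) * (s.factorial : ℝ))) *
    ((x - 1) / 2) ^ s * ((x + 1) / 2) ^ (n - s)

def jacobiPi (α β : ℝ) (n : ℕ) (x : ℝ) : ℝ := jacobiP α β n x / jacobiP α β n 1

def pd {d : ℕ} (j : Fin d) (g : (Fin d → ℝ) → ℝ) : (Fin d → ℝ) → ℝ :=
  fun y => deriv (fun s => g (Function.update y j s)) (y j)

/-!
The weights `ω` are the step distribution of a random walk on `ℤ^d`, and `ω^{∗n}` is the law of its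
`n`-th position, whose characteristic function is the `n`-th power of that of a single step. Since
the step is centered with covariance `Q`, the second-order Taylor expansion at the origin shows that
this power, evaluated at `ε ξ` with `n = ⌊t / ε²⌋`, tends to `exp (-t ⟨ξ, Q ξ⟩ / 2)`. By Lévy's
continuity theorem the rescaled walk converges weakly to the Gaussian law with covariance `t Q`. Its
density is read off from that of the standard Gaussian by the linear change of variables with matrix
the square root of `t Q`.
-/

open ProbabilityTheory
open scoped RealInnerProductSpace

variable {ι : Type*} {l : Filter ι}

lemma tendsto_one_add_pow_cexp {n : ι → ℕ} {g : ι → ℂ} {z : ℂ} (hg : Tendsto g l (𝓝 0))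
    (hng : Tendsto (fun i ↦ n i * g i) l (𝓝 z)) :
    Tendsto (fun i ↦ (1 + g i) ^ n i) l (𝓝 (Complex.exp z)) := by
  let slope : ℂ → ℂ := dslope (fun w ↦ Complex.log (1 + w)) 0
  have hderiv : HasDerivAt (fun w : ℂ ↦ Complex.log (1 + w)) 1 0 := by
    simpa using ((hasDerivAt_id (0 : ℂ)).const_add 1).clog (by simp)
  have hslope : Tendsto slope (𝓝 0) (𝓝 1) := by
    have hcont := continuousAt_dslope_same.2 hderiv.differentiableAt
    simpa only [ContinuousAt, dslope_same, hderiv.deriv] using hcont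
  have hlog (w : ℂ) : Complex.log (1 + w) = w * slope w := by
    simpa using (sub_smul_dslope (fun w ↦ Complex.log (1 + w)) 0 w).symm
  have hexp : Tendsto (fun i ↦ Complex.exp (n i * g i * slope (g i))) l (𝓝 (Complex.exp z)) := by
    simpa using (hng.mul (hslope.comp hg)).cexp
  refine hexp.congr' ?_
  have hne : ∀ᶠ w : ℂ in 𝓝 0, 1 + w ≠ 0 :=
    (continuous_const.add continuous_id).continuousAt.eventually_ne (by simp)
  filter_upwards [hg.eventually hne] with i hi
  rw [mul_assoc, ← hlog, Complex.exp_nat_mul, Complex.exp_log hi]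

lemma tendsto_floor_div_sq_mul_sq {t : ℝ} (ht : 0 ≤ t) :
    Tendsto (fun ε : ℝ ↦ (⌊t / ε ^ 2⌋₊ : ℝ) * ε ^ 2) (𝓝[>] 0) (𝓝 t) := by
  have hinv : Tendsto (fun ε : ℝ ↦ (ε⁻¹) ^ 2) (𝓝[>] 0) atTop :=
    (tendsto_pow_atTop two_ne_zero).comp tendsto_inv_nhdsGT_zero
  refine ((tendsto_nat_floor_mul_div_atTop ht).comp hinv).congr fun ε ↦ ?_
  simp only [Function.comp_apply, inv_pow, div_eq_mul_inv, inv_inv]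

section CharFun

variable {Ω : Type*} [MeasurableSpace Ω] {P : Measure Ω} [IsProbabilityMeasure P] {X : Ω → ℝ}

lemma charFun_map_sub_isLittleO_sq (hX : MemLp X 2 P) (hmean : P[X] = 0) :
    (fun s ↦ charFun (P.map X) s - (1 - (P[X ^ 2] : ℝ) * s ^ 2 / 2)) =o[𝓝 0] fun s ↦ s ^ 2 := by
  have hlaw : MemLp id 2 (P.map X) :=
    (memLp_map_measure_iff aestronglyMeasurable_id hX.1.aemeasurable).2 hX
  have htaylor := taylor_isLittleO_univ (x₀ := 0) (contDiff_charFun (n := 2) hlaw)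
  simp_rw [taylorWithinEval_charFun_two_zero hX.1.aemeasurable hlaw, hmean] at htaylor
  simpa only [Complex.ofReal_zero, zero_mul, add_zero, sub_zero] using htaylor

lemma tendsto_charFun_map_pow {n : ι → ℕ} {s : ι → ℝ} {t : ℝ} (hX : MemLp X 2 P)
    (hmean : P[X] = 0) (hs : Tendsto s l (𝓝 0))
    (hns : Tendsto (fun i ↦ n i * s i ^ 2) l (𝓝 t)) :
    Tendsto (fun i ↦ charFun (P.map X) (s i) ^ n i) l
      (𝓝 (Complex.exp (-(t * (P[X ^ 2] : ℝ)) / 2))) := by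
  have : IsProbabilityMeasure (P.map X) := Measure.isProbabilityMeasure_map hX.1.aemeasurable
  set q : ℝ := P[X ^ 2]
  let r : ℝ → ℂ := fun s ↦ charFun (P.map X) s - (1 - q * s ^ 2 / 2)
  have hsub : Tendsto (fun i ↦ charFun (P.map X) (s i) - 1) l (𝓝 0) := by
    have hcont : Tendsto (charFun (P.map X)) (𝓝 0) (𝓝 1) := by
      simpa using (continuous_charFun (μ := P.map X)).tendsto 0
    simpa using (hcont.comp hs).sub_const 1
  have hrem : Tendsto (fun i ↦ n i * r (s i)) l (𝓝 0) := by
    have hlittle : (fun i ↦ (n i : ℂ) * r (s i)) =o[l] fun i ↦ (n i : ℝ) * s i ^ 2 :=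
      (Asymptotics.isBigO_of_le _ (by simp)).mul_isLittleO
        ((charFun_map_sub_isLittleO_sq hX hmean).comp_tendsto hs)
    exact (Asymptotics.isLittleO_one_iff ℝ).1 (hlittle.trans_isBigO (hns.isBigO_one ℝ))
  have hnsub : Tendsto (fun i ↦ n i * (charFun (P.map X) (s i) - 1)) l (𝓝 (-(t * q) / 2)) := by
    have hmain : Tendsto (fun i ↦ ((n i * s i ^ 2 : ℝ) : ℂ)) l (𝓝 t) :=
      (Complex.continuous_ofReal.tendsto t).comp hns
    convert! hrem.sub (hmain.mul_const ((q : ℂ) / 2)) using 2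
    · simp only [r]; push_cast; ring
    · ring
  simpa using tendsto_one_add_pow_cexp hsub hnsub

end CharFun

section ConvPow

variable {M : Type*} [AddMonoid M] [MeasurableSpace M]

/-- The `n`-fold convolution power of a measure, i.e. the law of the position after `n` steps of the
random walk with step distribution `μ` started at the origin. -/
def convPow (μ : Measure M) : ℕ → Measure M
  | 0 => Measure.dirac 0
  | n + 1 => μ ∗ convPow μ n

instance isProbabilityMeasure_convPow [MeasurableAdd₂ M] (μ : Measure M) [IsProbabilityMeasure μ] :
    ∀ n, IsProbabilityMeasure (convPow μ n)
  | 0 => inferInstanceAs (IsProbabilityMeasure (Measure.dirac 0))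
  | n + 1 =>
    have := isProbabilityMeasure_convPow μ n
    inferInstanceAs (IsProbabilityMeasure (μ ∗ convPow μ n))

lemma map_convPow [MeasurableAdd₂ M] {M' : Type*} [AddMonoid M'] [MeasurableSpace M']
    [MeasurableAdd₂ M'] (L : M →+ M') (hL : Measurable L) (μ : Measure M) [IsProbabilityMeasure μ] :
    ∀ n, (convPow μ n).map L = convPow (μ.map L) n
  | 0 => by rw [convPow, convPow, Measure.map_dirac' hL, map_zero]
  | n + 1 => by rw [convPow, convPow, Measure.map_conv_addMonoidHom L hL, map_convPow L hL μ n]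

end ConvPow

section Euclidean

variable {E : Type*} [NormedAddCommGroup E] [InnerProductSpace ℝ E] [MeasurableSpace E]
  [BorelSpace E]

lemma charFun_convPow [SecondCountableTopology E] (μ : Measure E) [IsProbabilityMeasure μ]
    (ξ : E) : ∀ n, charFun (convPow μ n) ξ = charFun μ ξ ^ n
  | 0 => by simp [convPow]
  | n + 1 => by rw [convPow, charFun_conv, charFun_convPow μ ξ n, pow_succ']

lemma charFun_map_inner (μ : Measure E) (ξ : E) (s : ℝ) :
    charFun (μ.map (⟪·, ξ⟫)) s = charFun μ (s • ξ) := by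
  rw [charFun_apply, charFun_apply, integral_map (by fun_prop) (by fun_prop)]
  simp [inner_smul_right, mul_comm]

variable [FiniteDimensional ℝ E]

lemma tendsto_integral_of_tendsto_charFun [l.IsCountablyGenerated] {ν : ι → Measure E}
    [∀ i, IsProbabilityMeasure (ν i)] {γ : Measure E} [IsProbabilityMeasure γ]
    (h : ∀ ξ, Tendsto (fun i ↦ charFun (ν i) ξ) l (𝓝 (charFun γ ξ)))
    (F : BoundedContinuousFunction E ℝ) :
    Tendsto (fun i ↦ ∫ x, F x ∂(ν i)) l (𝓝 (∫ x, F x ∂γ)) := by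
  refine tendsto_of_seq_tendsto fun u hu ↦ ?_
  let law (k : ℕ) : ProbabilityMeasure E := ⟨ν (u k), inferInstance⟩
  have hlaw : Tendsto law atTop (𝓝 ⟨γ, inferInstance⟩) :=
    ProbabilityMeasure.tendsto_iff_tendsto_charFun.2 fun ξ ↦ (h ξ).comp hu
  exact ProbabilityMeasure.tendsto_iff_forall_integral_tendsto.1 hlaw F

lemma tendsto_integral_smul_convPow [l.IsCountablyGenerated] {μ : Measure E}
    [IsProbabilityMeasure μ] (hL2 : MemLp id 2 μ) (hmean : ∀ ξ, ∫ x, ⟪x, ξ⟫ ∂μ = 0)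
    {t : ℝ} {γ : Measure E} [IsProbabilityMeasure γ]
    (hγ : ∀ ξ, charFun γ ξ = Complex.exp (-(t * (∫ x, ⟪x, ξ⟫ ^ 2 ∂μ : ℝ)) / 2))
    {n : ι → ℕ} {s : ι → ℝ} (hs : Tendsto s l (𝓝 0))
    (hns : Tendsto (fun i ↦ n i * s i ^ 2) l (𝓝 t)) (F : BoundedContinuousFunction E ℝ) :
    Tendsto (fun i ↦ ∫ x, F (s i • x) ∂(convPow μ (n i))) l (𝓝 (∫ x, F x ∂γ)) := by
  have hmap (i : ι) :
      ∫ x, F (s i • x) ∂(convPow μ (n i)) = ∫ x, F x ∂((convPow μ (n i)).map (s i • ·)) :=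
    (integral_map (by fun_prop) (by fun_prop)).symm
  have (i : ι) : IsProbabilityMeasure ((convPow μ (n i)).map (s i • ·)) :=
    Measure.isProbabilityMeasure_map (by fun_prop)
  simp_rw [hmap]
  refine tendsto_integral_of_tendsto_charFun (fun ξ ↦ ?_) F
  have hξ : MemLp (fun x ↦ ⟪x, ξ⟫) 2 μ := hL2.inner_const ξ
  simp_rw [hγ, charFun_map_smul, charFun_convPow, ← charFun_map_inner]
  exact tendsto_charFun_map_pow hξ (hmean ξ) hs hns

end Euclidean

section GaussianDensity

lemma map_withDensity_comp {α β : Type*} [MeasurableSpace α] [MeasurableSpace β] (μ : Measure α)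
    {T : α → β} (hT : Measurable T) {g : β → ENNReal} (hg : Measurable g) :
    (μ.withDensity (g ∘ T)).map T = (μ.map T).withDensity g := by
  ext A hA
  rw [Measure.map_apply hT hA, withDensity_apply _ (hT hA), withDensity_apply _ hA,
    setLIntegral_map hA hg hT]
  rfl

section Standard

variable (E : Type*) [NormedAddCommGroup E] [InnerProductSpace ℝ E] [FiniteDimensional ℝ E]
  [MeasurableSpace E] [BorelSpace E]

lemma integrable_rexp_neg_norm_sq_div_two :
    Integrable (fun x : E ↦ Real.exp (-‖x‖ ^ 2 / 2)) := by
  refine .of_integral_ne_zero (ne_of_gt ?_)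
  have h := GaussianFourier.integral_rexp_neg_mul_sq_norm (V := E) (b := 1 / 2) (by norm_num)
  have hexp (x : E) : -‖x‖ ^ 2 / 2 = -(1 / 2) * ‖x‖ ^ 2 := by ring
  simp_rw [hexp, h]
  positivity

lemma stdGaussian_eq_withDensity :
    stdGaussian E = volume.withDensity fun x ↦ ENNReal.ofReal
      ((2 * π) ^ (-(Module.finrank ℝ E : ℝ) / 2) * Real.exp (-‖x‖ ^ 2 / 2)) := by
  set c : ℝ := (2 * π) ^ (-(Module.finrank ℝ E : ℝ) / 2)
  have hint := (integrable_rexp_neg_norm_sq_div_two E).const_mul c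
  have := isFiniteMeasure_withDensity_ofReal hint.2
  refine Measure.ext_of_charFun (funext fun ξ ↦ ?_)
  have hc : (c : ℂ) * (2 * π) ^ (Module.finrank ℝ E / 2 : ℂ) = 1 := by
    have hreal : c * (2 * π) ^ (Module.finrank ℝ E / 2 : ℝ) = 1 := by
      rw [← Real.rpow_add (by positivity), neg_div, neg_add_cancel, Real.rpow_zero]
    have hcpow := Complex.ofReal_cpow (show 0 ≤ 2 * π by positivity) (Module.finrank ℝ E / 2)
    push_cast at hcpow
    rw [← hcpow, ← Complex.ofReal_mul, hreal, Complex.ofReal_one]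
  have hfourier := GaussianFourier.integral_cexp_neg_mul_sq_norm_add (V := E) (b := 1 / 2)
    (by norm_num) Complex.I ξ
  have hfactor (x : E) : (c * Real.exp (-‖x‖ ^ 2 / 2)) • Complex.exp (⟪x, ξ⟫ * Complex.I) =
      c * Complex.exp (-(1 / 2) * ‖x‖ ^ 2 + Complex.I * ⟪ξ, x⟫) := by
    rw [Complex.real_smul, real_inner_comm, Complex.exp_add]
    push_cast
    ring_nf
  rw [charFun_stdGaussian, charFun_apply,
    integral_withDensity_eq_integral_toReal_smul (by fun_prop) (by simp)]
  simp_rw [ENNReal.toReal_ofReal (show 0 ≤ c * Real.exp _ by positivity), hfactor]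
  rw [integral_const_mul, hfourier, ← mul_assoc, div_div_eq_mul_div, div_one, mul_comm (π : ℂ) 2,
    hc, one_mul, Complex.I_sq]
  ring_nf

end Standard

variable {κ : Type*} [Fintype κ] [DecidableEq κ]

/-- The density of the Gaussian law on `ℝ^κ` with mean `m` and positive definite covariance
matrix `S`; the multivariate counterpart of `gaussianPDFReal`. -/
def multivariateGaussianPDFReal (m : EuclideanSpace ℝ κ) (S : Matrix κ κ ℝ)
    (x : EuclideanSpace ℝ κ) : ℝ :=
  (2 * π) ^ (-(Fintype.card κ : ℝ) / 2) * (√S.det)⁻¹ *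
    Real.exp (-((x - m).ofLp ⬝ᵥ S⁻¹ *ᵥ (x - m).ofLp) / 2)

lemma multivariateGaussianPDFReal_nonneg (m : EuclideanSpace ℝ κ) (S : Matrix κ κ ℝ)
    (x : EuclideanSpace ℝ κ) : 0 ≤ multivariateGaussianPDFReal m S x := by
  unfold multivariateGaussianPDFReal
  positivity

lemma measurable_multivariateGaussianPDFReal (m : EuclideanSpace ℝ κ) (S : Matrix κ κ ℝ) :
    Measurable (multivariateGaussianPDFReal m S) := by
  unfold multivariateGaussianPDFReal
  have : Continuous fun x : EuclideanSpace ℝ κ ↦ (x - m).ofLp ⬝ᵥ S⁻¹ *ᵥ (x - m).ofLp := by fun_prop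
  fun_prop

open scoped MatrixOrder

lemma sqrt_mulVec_dotProduct_inv_mulVec {S : Matrix κ κ ℝ} (hS : S.PosDef) (x : κ → ℝ) :
    (CFC.sqrt S *ᵥ x) ⬝ᵥ S⁻¹ *ᵥ (CFC.sqrt S *ᵥ x) = x ⬝ᵥ x := by
  have hsq : CFC.sqrt S * CFC.sqrt S = S := CFC.sqrt_mul_sqrt_self S hS.posSemidef.nonneg
  have hsymm : (CFC.sqrt S)ᵀ = CFC.sqrt S := by
    simpa [IsSelfAdjoint, star_eq_conjTranspose] using (CFC.sqrt_nonneg S).isSelfAdjoint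
  have hunit : IsUnit (CFC.sqrt S).det := by
    rw [hS.posSemidef.det_sqrt]
    simpa using (Real.sqrt_pos.2 hS.det_pos).ne'
  have hinv : CFC.sqrt S * S⁻¹ * CFC.sqrt S = 1 := by
    nth_rw 2 [← hsq]
    rw [Matrix.mul_inv_rev, mul_nonsing_inv_cancel_left _ _ hunit, nonsing_inv_mul _ hunit]
  rw [dotProduct_comm, dotProduct_mulVec, ← mulVec_transpose, hsymm, mulVec_mulVec, mulVec_mulVec,
    hinv, one_mulVec]

lemma map_const_add_toEuclideanCLM_volume (m : EuclideanSpace ℝ κ) {A : Matrix κ κ ℝ}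
    (hA : A.det ≠ 0) :
    volume.map (fun x ↦ m + toEuclideanCLM (𝕜 := ℝ) A x) = ENNReal.ofReal |A.det⁻¹| • volume := by
  let T : EuclideanSpace ℝ κ →L[ℝ] EuclideanSpace ℝ κ := toEuclideanCLM (𝕜 := ℝ) A
  have hdet : LinearMap.det T.toLinearMap = A.det := by
    simp [T, coe_toEuclideanCLM_eq_toEuclideanLin, toLpLin_eq_toLin]
  have hT : volume.map T = ENNReal.ofReal |A.det⁻¹| • volume := by
    rw [← hdet]
    exact Measure.map_linearMap_addHaar_eq_smul_addHaar volume (hdet ▸ hA)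
  calc volume.map (fun x ↦ m + T x)
      = (volume.map T).map (m + ·) := (Measure.map_map (by fun_prop) T.continuous.measurable).symm
    _ = ENNReal.ofReal |A.det⁻¹| • volume := by rw [hT, Measure.map_smul, map_add_left_eq_self]

lemma multivariateGaussian_eq_withDensity (m : EuclideanSpace ℝ κ) {S : Matrix κ κ ℝ}
    (hS : S.PosDef) :
    multivariateGaussian m S =
      volume.withDensity fun x ↦ ENNReal.ofReal (multivariateGaussianPDFReal m S x) := by
  let A : EuclideanSpace ℝ κ →L[ℝ] EuclideanSpace ℝ κ := toEuclideanCLM (𝕜 := ℝ) (CFC.sqrt S)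
  have hpos : 0 < √S.det := Real.sqrt_pos.2 hS.det_pos
  have hdet : (CFC.sqrt S).det = √S.det := by simpa using hS.posSemidef.det_sqrt
  have hvol : volume.map (fun x ↦ m + A x) = ENNReal.ofReal (√S.det)⁻¹ • volume := by
    rw [map_const_add_toEuclideanCLM_volume m (hdet ▸ hpos.ne'), hdet, abs_of_pos (inv_pos.2 hpos)]
  have hstd (x : EuclideanSpace ℝ κ) :
      (2 * π) ^ (-(Module.finrank ℝ (EuclideanSpace ℝ κ) : ℝ) / 2) * Real.exp (-‖x‖ ^ 2 / 2) =
        √S.det * multivariateGaussianPDFReal m S (m + A x) := by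
    have hquad : ‖x‖ ^ 2 = (A x).ofLp ⬝ᵥ S⁻¹ *ᵥ (A x).ofLp := by
      rw [ofLp_toEuclideanCLM, sqrt_mulVec_dotProduct_inv_mulVec hS, EuclideanSpace.norm_sq_eq]
      simp [dotProduct, pow_two]
    rw [multivariateGaussianPDFReal, add_sub_cancel_left, hquad, finrank_euclideanSpace]
    field_simp
  let g : EuclideanSpace ℝ κ → ENNReal := fun x ↦
    ENNReal.ofReal (√S.det * multivariateGaussianPDFReal m S x)
  have hg : Measurable g :=
    ((measurable_multivariateGaussianPDFReal m S).const_mul _).ennreal_ofReal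
  have hstdGaussian :
      stdGaussian (EuclideanSpace ℝ κ) = volume.withDensity (g ∘ fun x ↦ m + A x) := by
    simp_rw [stdGaussian_eq_withDensity, hstd]
    rfl
  rw [multivariateGaussian, hstdGaussian, map_withDensity_comp _ (by fun_prop) hg, hvol,
    withDensity_smul_measure, ← withDensity_smul _ hg]
  congr with x
  rw [Pi.smul_apply, smul_eq_mul, ← ENNReal.ofReal_mul (inv_pos.2 hpos).le,
    inv_mul_cancel_left₀ hpos.ne']

lemma integral_multivariateGaussian (m : EuclideanSpace ℝ κ) {S : Matrix κ κ ℝ} (hS : S.PosDef)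
    (F : EuclideanSpace ℝ κ → ℝ) :
    ∫ x, F x ∂(multivariateGaussian m S) = ∫ x, F x * multivariateGaussianPDFReal m S x := by
  rw [multivariateGaussian_eq_withDensity m hS, integral_withDensity_eq_integral_toReal_smul
    (measurable_multivariateGaussianPDFReal m S).ennreal_ofReal (by simp)]
  simp_rw [ENNReal.toReal_ofReal (multivariateGaussianPDFReal_nonneg m S _), smul_eq_mul, mul_comm]

lemma multivariateGaussianPDFReal_zero_smul {S : Matrix κ κ ℝ} (hS : S.PosDef) {t : ℝ} (ht : 0 < t)
    (x : EuclideanSpace ℝ κ) :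
    multivariateGaussianPDFReal 0 (t • S) x =
      (2 * π * t) ^ (-(Fintype.card κ : ℝ) / 2) * (√S.det)⁻¹ *
        Real.exp (-(x.ofLp ⬝ᵥ S⁻¹ *ᵥ x.ofLp) / (2 * t)) := by
  have hdet : (√(t • S).det)⁻¹ = t ^ (-(Fintype.card κ : ℝ) / 2) * (√S.det)⁻¹ := by
    rw [det_smul, Real.sqrt_mul (by positivity), mul_inv, Real.sqrt_eq_rpow,
      ← Real.rpow_natCast_mul ht.le, ← Real.rpow_neg ht.le]
    ring_nf
  have hinv : (t • S)⁻¹ = t⁻¹ • S⁻¹ := by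
    simpa [Units.smul_def] using inv_smul' S (Units.mk0 t ht.ne') hS.det_pos.ne'.isUnit
  rw [multivariateGaussianPDFReal, sub_zero, hdet, hinv, smul_mulVec, dotProduct_smul, smul_eq_mul,
    Real.mul_rpow (by positivity) ht.le, mul_assoc (_ ^ _) (_ ^ _)]
  congr 2
  field_simp

end GaussianDensity

section Moments

variable {κ Ω : Type*} [Fintype κ] [MeasurableSpace Ω] {P : Measure Ω}
  {X : Ω → EuclideanSpace ℝ κ}

lemma integral_inner_right_eq_zero (hX : ∀ i, Integrable (fun a ↦ X a i) P)
    (hmean : ∀ i, ∫ a, X a i ∂P = 0) (ξ : EuclideanSpace ℝ κ) : ∫ a, ⟪X a, ξ⟫ ∂P = 0 := by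
  simp only [PiLp.inner_apply, RCLike.inner_apply, conj_trivial]
  rw [integral_finsetSum _ fun i _ ↦ (hX i).const_mul (ξ i)]
  simp_rw [integral_const_mul, hmean, mul_zero, Finset.sum_const_zero]

lemma integral_inner_sq (hX : ∀ i, MemLp (fun a ↦ X a i) 2 P) (ξ : EuclideanSpace ℝ κ) :
    ∫ a, ⟪X a, ξ⟫ ^ 2 ∂P =
      ξ.ofLp ⬝ᵥ Matrix.of (fun i j ↦ ∫ a, X a i * X a j ∂P) *ᵥ ξ.ofLp := by
  have hint (i j : κ) : Integrable (fun a ↦ ξ i * (X a i * X a j * ξ j)) P :=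
    (((hX i).integrable_mul (hX j)).mul_const _).const_mul _
  have hexpand (a : Ω) : ⟪X a, ξ⟫ ^ 2 = ∑ i, ∑ j, ξ i * (X a i * X a j * ξ j) := by
    simp only [PiLp.inner_apply, RCLike.inner_apply, conj_trivial, pow_two, Finset.sum_mul_sum]
    exact Finset.sum_congr rfl fun i _ ↦ Finset.sum_congr rfl fun j _ ↦ by ring
  simp_rw [hexpand, dotProduct, mulVec, dotProduct, Matrix.of_apply, Finset.mul_sum]
  rw [integral_finsetSum _ fun i _ ↦ integrable_finsetSum _ fun j _ ↦ hint i j]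
  refine Finset.sum_congr rfl fun i _ ↦ ?_
  rw [integral_finsetSum _ fun j _ ↦ hint i j]
  simp_rw [integral_const_mul, integral_mul_const]

end Moments

section MassFunction

variable {α : Type*} [MeasurableSpace α] {w : α → ℝ}

/-- The measure with mass function `w`; negative values of `w` are truncated to `0`. -/
def massMeasure (w : α → ℝ) : Measure α :=
  Measure.sum fun v ↦ ENNReal.ofReal (w v) • Measure.dirac v

lemma isProbabilityMeasure_massMeasure (hw : ∀ v, 0 ≤ w v) (hmass : ∑' v, w v = 1) :
    IsProbabilityMeasure (massMeasure w) := by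
  have hsummable : Summable w := by
    by_contra h
    simp [tsum_eq_zero_of_not_summable h] at hmass
  constructor
  simp only [massMeasure, Measure.sum_apply _ MeasurableSet.univ, Measure.smul_apply, measure_univ,
    smul_eq_mul, mul_one, ← ENNReal.ofReal_tsum_of_nonneg hw hsummable, hmass, ENNReal.ofReal_one]

variable [MeasurableSingletonClass α]

lemma massMeasure_singleton (w : α → ℝ) (v : α) : massMeasure w {v} = ENNReal.ofReal (w v) :=
  Measure.sum_smul_dirac_singleton

variable [Countable α]

lemma integral_massMeasure (hw : ∀ v, 0 ≤ w v) (g : α → ℝ) :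
    ∫ v, g v ∂(massMeasure w) = ∑' v, w v * g v := by
  rw [massMeasure, integral_sum_dirac fun _ ↦ ENNReal.ofReal_ne_top]
  simp_rw [ENNReal.toReal_ofReal (hw _), smul_eq_mul]

lemma integrable_massMeasure_iff (hw : ∀ v, 0 ≤ w v) {g : α → ℝ} :
    Integrable g (massMeasure w) ↔ Summable fun v ↦ w v * |g v| := by
  rw [massMeasure, integrable_sum_dirac_iff fun _ ↦ ENNReal.ofReal_ne_top]
  simp_rw [ENNReal.toReal_ofReal (hw _), Real.norm_eq_abs]

lemma massMeasure_eq_dirac [DecidableEq α] {a : α} (hw : ∀ v, w v = if v = a then 1 else 0) :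
    massMeasure w = Measure.dirac a := by
  refine Measure.ext_of_singleton fun v ↦ ?_
  by_cases hv : v = a <;> simp [massMeasure_singleton, hw, hv]

end MassFunction

section Lattice

variable {d : ℕ} {ω : (Fin d → ℤ) → ℝ}

lemma latticeConv_nonneg {x : (Fin d → ℤ) → ℝ} (hω : ∀ v, 0 ≤ ω v) (hx : ∀ v, 0 ≤ x v)
    (v : Fin d → ℤ) : 0 ≤ latticeConv ω x v :=
  tsum_nonneg fun η ↦ mul_nonneg (hω (v - η)) (hx η)

lemma massMeasure_latticeConv {x : (Fin d → ℤ) → ℝ} (hω : ∀ v, 0 ≤ ω v) (hx : ∀ v, 0 ≤ x v)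
    [IsFiniteMeasure (massMeasure ω)] [IsFiniteMeasure (massMeasure x)] :
    massMeasure (latticeConv ω x) = massMeasure ω ∗ massMeasure x := by
  refine Measure.ext_of_singleton fun v ↦ ?_
  have hbound (u : Fin d → ℤ) : ω u ≤ (massMeasure ω).real Set.univ := by
    have h : (massMeasure ω).real {u} ≤ (massMeasure ω).real Set.univ :=
      measureReal_mono (Set.subset_univ _)
    rwa [measureReal_def, massMeasure_singleton, ENNReal.toReal_ofReal (hω u)] at h
  have hint : Integrable (fun η ↦ ω (v - η)) (massMeasure x) :=
    .of_bound (.of_discrete) _ (ae_of_all _ fun η ↦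
      (Real.norm_of_nonneg (hω _)).trans_le (hbound _))
  calc massMeasure (latticeConv ω x) {v}
      = ENNReal.ofReal (∫ η, ω (v - η) ∂(massMeasure x)) := by
        simp_rw [massMeasure_singleton, integral_massMeasure hx, latticeConv, mul_comm]
    _ = ∫⁻ η, massMeasure ω {v - η} ∂(massMeasure x) := by
        simp_rw [massMeasure_singleton]
        exact ofReal_integral_eq_lintegral_ofReal hint (ae_of_all _ fun η ↦ hω _)
    _ = (massMeasure ω ∗ massMeasure x) {v} := by
        rw [Measure.conv_comm, Measure.conv, Measure.map_apply measurable_add (.singleton v),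
          Measure.prod_apply (measurable_add (.singleton v))]
        refine lintegral_congr fun η ↦ congrArg _ (Set.ext fun u ↦ ?_)
        simp [eq_sub_iff_add_eq']

lemma massMeasure_eq_convPow (hω : ∀ v, 0 ≤ ω v) [IsProbabilityMeasure (massMeasure ω)]
    {p : ℕ → (Fin d → ℤ) → ℝ} (hp0 : ∀ v, p 0 v = if v = 0 then 1 else 0)
    (hp : ∀ n, p (n + 1) = latticeConv ω (p n)) :
    ∀ n, (∀ v, 0 ≤ p n v) ∧ massMeasure (p n) = convPow (massMeasure ω) n
  | 0 => ⟨fun v ↦ by rw [hp0]; split_ifs <;> norm_num, massMeasure_eq_dirac hp0⟩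
  | n + 1 => by
    obtain ⟨hnonneg, hlaw⟩ := massMeasure_eq_convPow hω hp0 hp n
    have : IsFiniteMeasure (massMeasure (p n)) := hlaw ▸ inferInstance
    rw [hp]
    exact ⟨latticeConv_nonneg hω hnonneg, by rw [massMeasure_latticeConv hω hnonneg, hlaw, convPow]⟩

variable (d) in
/-- The inclusion of the lattice `ℤ^d` into Euclidean space. -/
def latticeEmbedding : (Fin d → ℤ) →+ EuclideanSpace ℝ (Fin d) where
  toFun v := WithLp.toLp 2 fun i ↦ (v i : ℝ)
  map_zero' := by ext; simp
  map_add' v w := by ext; simp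

lemma latticeEmbedding_apply (v : Fin d → ℤ) (i : Fin d) : latticeEmbedding d v i = v i := rfl

lemma summable_mul_coord_sq (hQ : (covQ d ω).PosDef) (i : Fin d) :
    Summable fun v : Fin d → ℤ ↦ ω v * |(v i : ℝ) ^ 2| := by
  -- A divergent second moment would make the diagonal entry `covQ d ω i i` the junk value `0`.
  by_contra h
  refine (hQ.diag_pos (i := i)).ne' ?_
  simp_rw [abs_sq, pow_two, ← mul_assoc] at h
  exact tsum_eq_zero_of_not_summable h

lemma memLp_latticeEmbedding (hω : ∀ v, 0 ≤ ω v) (hQ : (covQ d ω).PosDef) :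
    MemLp (latticeEmbedding d) 2 (massMeasure ω) :=
  memLp_piLp_iff.2 fun i ↦ (memLp_two_iff_integrable_sq .of_discrete).2 <|
    (integrable_massMeasure_iff hω).2 (summable_mul_coord_sq hQ i)

lemma covQ_eq_integral (hω : ∀ v, 0 ≤ ω v) :
    covQ d ω = Matrix.of fun i j ↦
      ∫ v, latticeEmbedding d v i * latticeEmbedding d v j ∂(massMeasure ω) := by
  ext i j
  simp_rw [covQ, Matrix.of_apply, integral_massMeasure hω, latticeEmbedding_apply, mul_assoc]

/-- The law on Euclidean space of one step of the walk on `ℤ^d` with step weights `ω`. -/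
def stepLaw (ω : (Fin d → ℤ) → ℝ) : Measure (EuclideanSpace ℝ (Fin d)) :=
  (massMeasure ω).map (latticeEmbedding d)

lemma isProbabilityMeasure_stepLaw [IsProbabilityMeasure (massMeasure ω)] :
    IsProbabilityMeasure (stepLaw ω) :=
  Measure.isProbabilityMeasure_map .of_discrete

lemma integral_stepLaw {g : EuclideanSpace ℝ (Fin d) → ℝ} (hg : Continuous g) :
    ∫ x, g x ∂(stepLaw ω) = ∫ v, g (latticeEmbedding d v) ∂(massMeasure ω) :=
  integral_map .of_discrete hg.aestronglyMeasurable

lemma memLp_id_stepLaw (hω : ∀ v, 0 ≤ ω v) (hQ : (covQ d ω).PosDef) : MemLp id 2 (stepLaw ω) :=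
  (memLp_map_measure_iff aestronglyMeasurable_id .of_discrete).2 (memLp_latticeEmbedding hω hQ)

lemma integral_inner_stepLaw (hω : ∀ v, 0 ≤ ω v) [IsProbabilityMeasure (massMeasure ω)]
    (hcent : ∀ i, ∑' v : Fin d → ℤ, ω v * (v i : ℝ) = 0) (hQ : (covQ d ω).PosDef)
    (ξ : EuclideanSpace ℝ (Fin d)) : ∫ x, ⟪x, ξ⟫ ∂(stepLaw ω) = 0 := by
  rw [integral_stepLaw (by fun_prop)]
  refine integral_inner_right_eq_zero (fun i ↦ ?_) (fun i ↦ ?_) ξ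
  · exact (memLp_piLp_iff.1 (memLp_latticeEmbedding hω hQ) i).integrable one_le_two
  · rw [integral_massMeasure hω]
    exact hcent i

lemma integral_inner_sq_stepLaw (hω : ∀ v, 0 ≤ ω v) (hQ : (covQ d ω).PosDef)
    (ξ : EuclideanSpace ℝ (Fin d)) :
    ∫ x, ⟪x, ξ⟫ ^ 2 ∂(stepLaw ω) = ξ.ofLp ⬝ᵥ covQ d ω *ᵥ ξ.ofLp := by
  rw [integral_stepLaw (by fun_prop), covQ_eq_integral hω,
    integral_inner_sq (memLp_piLp_iff.1 (memLp_latticeEmbedding hω hQ))]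

lemma tsum_mul_eq_integral_convPow (hω : ∀ v, 0 ≤ ω v) [IsProbabilityMeasure (massMeasure ω)]
    {p : ℕ → (Fin d → ℤ) → ℝ} (hp0 : ∀ v, p 0 v = if v = 0 then 1 else 0)
    (hp : ∀ n, p (n + 1) = latticeConv ω (p n)) {g : EuclideanSpace ℝ (Fin d) → ℝ}
    (hg : Continuous g) (n : ℕ) :
    ∑' v, p n v * g (latticeEmbedding d v) = ∫ x, g x ∂(convPow (stepLaw ω) n) := by
  obtain ⟨hnonneg, hlaw⟩ := massMeasure_eq_convPow hω hp0 hp n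
  rw [stepLaw, ← map_convPow _ .of_discrete, ← hlaw,
    integral_map .of_discrete hg.aestronglyMeasurable, integral_massMeasure hnonneg]

end Lattice

theorem simple_gossip_weak_convergence_general
    (d : ℕ) (ω : (Fin d → ℤ) → ℝ) (hnn : ∀ v, 0 ≤ ω v)
    (hmass : ∑' v : Fin d → ℤ, ω v = 1)
    (hcent : ∀ i, ∑' v : Fin d → ℤ, ω v * (v i : ℝ) = 0)
    (hQ : (covQ d ω).PosDef)
    (p : ℕ → (Fin d → ℤ) → ℝ)
    (hp0 : ∀ v, p 0 v = if v = 0 then 1 else 0)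
    (hp : ∀ n, p (n + 1) = latticeConv ω (p n))
    (t : ℝ) (ht : 0 < t)
    (f : (Fin d → ℝ) → ℝ) (hf : Continuous f) (hfb : ∃ M, ∀ y, |f y| ≤ M) :
    Tendsto (fun ε : ℝ => ∑' v : Fin d → ℤ, p ⌊t / ε ^ 2⌋₊ v * f (fun i => ε * (v i : ℝ)))
      (𝓝[>] 0)
      (𝓝 (∫ y : Fin d → ℝ, f y *
          ((2 * π * t) ^ (-(d : ℝ) / 2) * (Real.sqrt (covQ d ω).det)⁻¹ *
            Real.exp (-(y ⬝ᵥ ((covQ d ω)⁻¹ *ᵥ y)) / (2 * t))))) := by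
  have := isProbabilityMeasure_massMeasure hnn hmass
  have := isProbabilityMeasure_stepLaw (ω := ω)
  obtain ⟨M, hM⟩ := hfb
  let F : BoundedContinuousFunction (EuclideanSpace ℝ (Fin d)) ℝ :=
    .ofNormedAddCommGroup (fun x ↦ f x.ofLp) (by fun_prop) M fun x ↦ hM x.ofLp
  have hchar (ξ : EuclideanSpace ℝ (Fin d)) : charFun (multivariateGaussian 0 (t • covQ d ω)) ξ =
      Complex.exp (-(t * (∫ x, ⟪x, ξ⟫ ^ 2 ∂(stepLaw ω) : ℝ)) / 2) := by
    rw [charFun_multivariateGaussian (hQ.smul ht).posSemidef, integral_inner_sq_stepLaw hnn hQ]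
    simp [smul_mulVec, neg_div]
  have hclt := tendsto_integral_smul_convPow (memLp_id_stepLaw hnn hQ)
    (integral_inner_stepLaw hnn hcent hQ) hchar (tendsto_nhdsWithin_of_tendsto_nhds tendsto_id)
    (tendsto_floor_div_sq_mul_sq ht.le) F
  rw [integral_multivariateGaussian 0 (hQ.smul ht)] at hclt
  convert! hclt using 2 with ε
  · exact tsum_mul_eq_integral_convPow hnn hp0 hp (g := fun x ↦ F (ε • x)) (by fun_prop) _
  · rw [← (PiLp.volume_preserving_ofLp (Fin d)).integral_comp
      (MeasurableEquiv.toLp 2 (Fin d → ℝ)).symm.measurableEmbedding]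
    simp_rw [multivariateGaussianPDFReal_zero_smul hQ ht, Fintype.card_fin]
    rfl

/-- Weak convergence of simple gossip on ℤ^d to the fundamental solution of the anisotropic
heat equation (lattice central limit theorem). -/
theorem simple_gossip_weak_convergence
    (d : ℕ) (hd : 1 ≤ d) (ω : (Fin d → ℤ) → ℝ)
    (hfin : (Function.support ω).Finite) (hnn : ∀ v, 0 ≤ ω v)
    (hmass : ∑' v : Fin d → ℤ, ω v = 1)
    (hcent : ∀ i, ∑' v : Fin d → ℤ, ω v * (v i : ℝ) = 0)
    (hQ : (covQ d ω).PosDef)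
    (p : ℕ → (Fin d → ℤ) → ℝ)
    (hp0 : ∀ v, p 0 v = if v = 0 then 1 else 0)
    (hp : ∀ n, p (n + 1) = latticeConv ω (p n))
    (t : ℝ) (ht : 0 < t)
    (f : (Fin d → ℝ) → ℝ) (hf : Continuous f) (hfb : ∃ M, ∀ y, |f y| ≤ M) :
    Tendsto (fun ε : ℝ => ∑' v : Fin d → ℤ, p ⌊t / ε ^ 2⌋₊ v * f (fun i => ε * (v i : ℝ)))
      (𝓝[>] 0)
      (𝓝 (∫ y : Fin d → ℝ, f y *
          ((2 * π * t) ^ (-(d : ℝ) / 2) * (Real.sqrt (covQ d ω).det)⁻¹ *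
            Real.exp (-(y ⬝ᵥ ((covQ d ω)⁻¹ *ᵥ y)) / (2 * t))))) :=
  simple_gossip_weak_convergence_general d ω hnn hmass hcent hQ p hp0 hp t ht f hf hfb
end
end

section
/- Assume in addition that ω is aperiodic. Then sup_{v∈ℤ^d} | ω^{∗n}(v) − (2πn)^{−d/2} (det Q)^{−1/2} exp(−⟨v, Q⁻¹v⟩/(2n)) | = o(n^{−d/2}) as n → ∞; that is, n^{d/2} times this supremum tends to 0. (Local central limit theorem for simple gossip on ℤ^d.) -/
open MeasureTheory Matrix Filter Topology Real

noncomputable section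

/-!
Fourier inversion writes `(2π) ^ d * p n v` as the integral of `ω̂ ^ n` against a character over the
cube `[-π, π] ^ d`, and the heat kernel as the same kind of integral of a Gaussian over `ℝ ^ d`.
After the diffusive change of variables `ξ = x / √n`, the error multiplied by `n ^ (d / 2)` is
therefore at most, uniformly in `v`, a constant times the `L¹` distance between
`x ↦ ω̂ (x / √n) ^ n`, cut off outside `√n [-π, π] ^ d`, and `x ↦ exp (-⟨x, Q x⟩ / 2)`. The
second-order expansion of `ω̂` at the origin gives pointwise convergence; together with aperiodicity
and compactness of the cube it also gives `|ω̂ ξ| ≤ exp (-c ⟨ξ, Q ξ⟩)` on the cube for some `c > 0`,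
so the rescaled powers are dominated by a fixed Gaussian.
-/

section PosDefMatrix

variable {ι : Type*} [Fintype ι]

lemma dotProduct_transpose_mul_self_mulVec {m : Type*} [Fintype m] (A : Matrix m ι ℝ)
    (x : ι → ℝ) : x ⬝ᵥ ((Aᵀ * A) *ᵥ x) = ∑ i, (A *ᵥ x) i ^ 2 := by
  rw [← mulVec_mulVec, dotProduct_mulVec, vecMul_transpose]
  simp only [dotProduct, sq]

lemma norm_sq_le_sum_sq (y : ι → ℝ) : ‖y‖ ^ 2 ≤ ∑ i, y i ^ 2 := by
  have hy : ‖y‖ ≤ √(∑ i, y i ^ 2) := (pi_norm_le_iff_of_nonneg (Real.sqrt_nonneg _)).mpr fun i =>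
    Real.abs_le_sqrt (Finset.single_le_sum (fun j _ => sq_nonneg (y j)) (Finset.mem_univ i))
  exact (Real.le_sqrt (norm_nonneg y) (by positivity)).mp hy

lemma integral_cexp_neg_half_mul_sum_sq_sub_I_mul (s : ι → ℝ) :
    ∫ z : ι → ℝ, Complex.exp
        (-(1 / 2 : ℂ) * ∑ i, (z i : ℂ) ^ 2 + ∑ i, (-(Complex.I * s i)) * z i) =
      ((2 * π) ^ ((Fintype.card ι : ℝ) / 2) * exp (-(∑ i, s i ^ 2) / 2) : ℝ) := by
  have hpi : (π / (1 / 2) : ℂ) ^ (Fintype.card ι / 2 : ℂ) =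
      ((2 * π) ^ ((Fintype.card ι : ℝ) / 2) : ℝ) := by
    rw [Complex.ofReal_cpow (by positivity)]
    push_cast
    ring_nf
  have hsq : (∑ i, (-(Complex.I * s i)) ^ 2) / (4 * (1 / 2)) = ((-∑ i, s i ^ 2) / 2 : ℝ) := by
    simp only [neg_sq, mul_pow, Complex.I_sq, ← Finset.mul_sum]
    push_cast
    ring
  rw [GaussianFourier.integral_cexp_neg_mul_sum_add (by norm_num), hpi, hsq, ← Complex.ofReal_exp,
    Complex.ofReal_mul]

lemma mulVec_injective_of_isUnit_det [DecidableEq ι] {A : Matrix ι ι ℝ} (hA : IsUnit A.det) :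
    Function.Injective (A *ᵥ ·) :=
  mulVec_injective_iff_isUnit.mpr ((isUnit_iff_isUnit_det A).mpr hA)

open scoped MatrixOrder Matrix.Norms.L2Operator in
lemma exists_eq_transpose_mul_self_of_posDef [DecidableEq ι] {Q : Matrix ι ι ℝ} (hQ : Q.PosDef) :
    ∃ A : Matrix ι ι ℝ, IsUnit A.det ∧ Q = Aᵀ * A := by
  obtain ⟨A, hA, hQA⟩ :=
    CStarAlgebra.isStrictlyPositive_iff_eq_star_mul_self.mp hQ.isStrictlyPositive
  exact ⟨A, (isUnit_iff_isUnit_det A).mp hA, hQA⟩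

lemma norm_sq_isBigO_of_posDef {Q : Matrix ι ι ℝ} (hQ : Q.PosDef) (l : Filter (ι → ℝ)) :
    (fun x => ‖x‖ ^ 2) =O[l] fun x => x ⬝ᵥ (Q *ᵥ x) := by
  classical
  obtain ⟨A, hA, rfl⟩ := exists_eq_transpose_mul_self_of_posDef hQ
  obtain ⟨C, -, hC⟩ :=
    A.mulVecLin.injective_iff_antilipschitz.mp (mulVec_injective_of_isUnit_det hA)
  refine .of_bound (C ^ 2) (.of_forall fun x => ?_)
  have hx : ‖x‖ ≤ C * ‖A *ᵥ x‖ := by simpa using hC.le_mul_norm_sub x 0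
  have hAx : 0 ≤ ∑ i, (A *ᵥ x) i ^ 2 := by positivity
  rw [norm_pow, norm_norm, dotProduct_transpose_mul_self_mulVec, Real.norm_of_nonneg hAx]
  calc ‖x‖ ^ 2 ≤ (C * ‖A *ᵥ x‖) ^ 2 := by gcongr
    _ = C ^ 2 * ‖A *ᵥ x‖ ^ 2 := mul_pow ..
    _ ≤ C ^ 2 * ∑ i, (A *ᵥ x) i ^ 2 := by gcongr; exact norm_sq_le_sum_sq _

lemma measurableEmbedding_mulVec [DecidableEq ι] {A : Matrix ι ι ℝ} (hA : IsUnit A.det) :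
    MeasurableEmbedding (A *ᵥ ·) :=
  Continuous.measurableEmbedding (by fun_prop) (mulVec_injective_of_isUnit_det hA)

lemma map_mulVec_volume [DecidableEq ι] {A : Matrix ι ι ℝ} (hA : IsUnit A.det) :
    (volume : Measure (ι → ℝ)).map (A *ᵥ ·) = ENNReal.ofReal |A.det⁻¹| • volume :=
  Real.map_matrix_volume_pi_eq_smul_volume_pi hA.ne_zero

variable {E : Type*} [NormedAddCommGroup E]

lemma integral_comp_mulVec [DecidableEq ι] [NormedSpace ℝ E] {A : Matrix ι ι ℝ} (hA : IsUnit A.det)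
    (f : (ι → ℝ) → E) : ∫ x, f (A *ᵥ x) = |A.det|⁻¹ • ∫ x, f x := by
  rw [← (measurableEmbedding_mulVec hA).integral_map f, map_mulVec_volume hA,
    integral_smul_measure, ENNReal.toReal_ofReal (abs_nonneg _), abs_inv]

lemma integrable_comp_mulVec [DecidableEq ι] {A : Matrix ι ι ℝ} (hA : IsUnit A.det)
    {f : (ι → ℝ) → E} (hf : Integrable f) : Integrable fun x => f (A *ᵥ x) := by
  refine (measurableEmbedding_mulVec hA).integrable_map_iff.mp ?_
  rw [map_mulVec_volume hA]
  exact hf.smul_measure ENNReal.ofReal_ne_top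

lemma integrable_exp_neg_mul_dotProduct_mulVec {Q : Matrix ι ι ℝ} (hQ : Q.PosDef) {c : ℝ}
    (hc : 0 < c) : Integrable fun x : ι → ℝ => exp (-(c * (x ⬝ᵥ (Q *ᵥ x)))) := by
  classical
  obtain ⟨A, hA, rfl⟩ := exists_eq_transpose_mul_self_of_posDef hQ
  have hstd : Integrable fun y : ι → ℝ => exp (-c * ∑ i, y i ^ 2) := by
    convert! (GaussianFourier.integrable_cexp_neg_mul_sum_add (ι := ι) (b := (c : ℂ))
      (by simpa using hc) 0).norm using 2 with y
    rw [show -(c : ℂ) * ∑ i, (y i : ℂ) ^ 2 + ∑ i, (0 : ι → ℂ) i * y i =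
      ((-c * ∑ i, y i ^ 2 : ℝ) : ℂ) by simp, Complex.norm_exp_ofReal]
  simpa only [dotProduct_transpose_mul_self_mulVec, neg_mul] using integrable_comp_mulVec hA hstd

lemma integral_exp_neg_dotProduct_mulVec_mul_cexp [DecidableEq ι] {Q : Matrix ι ι ℝ} (hQ : Q.PosDef)
    (y : ι → ℝ) :
    ∫ x : ι → ℝ, (exp (-(x ⬝ᵥ (Q *ᵥ x)) / 2) : ℂ) * Complex.exp (-(Complex.I * ↑(x ⬝ᵥ y))) =
      ((2 * π) ^ ((Fintype.card ι : ℝ) / 2) * (√Q.det)⁻¹ * exp (-(y ⬝ᵥ (Q⁻¹ *ᵥ y)) / 2) : ℝ) := by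
  obtain ⟨A, hA, rfl⟩ := exists_eq_transpose_mul_self_of_posDef hQ
  set s : ι → ℝ := (A⁻¹)ᵀ *ᵥ y with hs
  have hpair (x : ι → ℝ) : x ⬝ᵥ y = ∑ i, s i * (A *ᵥ x) i := by
    change _ = s ⬝ᵥ (A *ᵥ x)
    rw [dotProduct_mulVec, hs, mulVec_transpose, vecMul_vecMul, nonsing_inv_mul _ hA,
      vecMul_one, dotProduct_comm]
  have hinv : y ⬝ᵥ ((Aᵀ * A)⁻¹ *ᵥ y) = ∑ i, s i ^ 2 := by
    rw [Matrix.mul_inv_rev, ← transpose_nonsing_inv, hs,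
      ← dotProduct_transpose_mul_self_mulVec, transpose_transpose]
  have hdet : √(Aᵀ * A).det = |A.det| := by
    rw [det_mul, det_transpose, Real.sqrt_mul_self_eq_abs]
  have hstd := integral_comp_mulVec hA fun z => Complex.exp
    (-(1 / 2 : ℂ) * ∑ i, (z i : ℂ) ^ 2 + ∑ i, (-(Complex.I * s i)) * z i)
  rw [integral_cexp_neg_half_mul_sum_sq_sub_I_mul] at hstd
  rw [hinv, hdet]
  convert hstd using 1
  · congr! 2 with x
    rw [Complex.ofReal_exp, ← Complex.exp_add, dotProduct_transpose_mul_self_mulVec, hpair]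
    push_cast
    simp only [neg_mul, mul_assoc, Finset.sum_neg_distrib, ← Finset.mul_sum]
    ring_nf
  · rw [Complex.real_smul]
    push_cast
    ring

/-- The density at `y` of the centered Gaussian law of covariance `t • Q`, the value at time `t`
of the heat kernel of covariance `Q`. -/
def gaussianHeatKernel [DecidableEq ι] (Q : Matrix ι ι ℝ) (t : ℝ) (y : ι → ℝ) : ℝ :=
  (2 * π * t) ^ (-(Fintype.card ι : ℝ) / 2) * (√Q.det)⁻¹ * exp (-(y ⬝ᵥ (Q⁻¹ *ᵥ y)) / (2 * t))

lemma sqrt_pow_mul_pow_mul_rpow_neg {a t : ℝ} (ha : 0 < a) (ht : 0 < t) (k : ℕ) :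
    √t ^ k * (a ^ k * (a * t) ^ (-(k : ℝ) / 2)) = a ^ ((k : ℝ) / 2) := by
  have hak : a ^ k = a ^ ((k : ℝ) / 2) * a ^ ((k : ℝ) / 2) := by
    rw [← Real.rpow_add ha, add_halves, Real.rpow_natCast]
  rw [hak, ← Real.rpow_natCast, ← Real.rpow_div_two_eq_sqrt _ ht.le, neg_div,
    Real.rpow_neg (by positivity), Real.mul_rpow ha.le ht.le]
  field_simp

lemma integral_exp_neg_mul_cexp_eq_gaussianHeatKernel [DecidableEq ι] {Q : Matrix ι ι ℝ}
    (hQ : Q.PosDef) {t : ℝ} (ht : 0 < t) (y : ι → ℝ) :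
    ∫ x : ι → ℝ, (exp (-(x ⬝ᵥ (Q *ᵥ x)) / 2) : ℂ) *
        Complex.exp (-(Complex.I * ↑(((√t)⁻¹ • x) ⬝ᵥ y))) =
      (√t ^ Fintype.card ι * ((2 * π) ^ Fintype.card ι * gaussianHeatKernel Q t y) : ℝ) := by
  have hscale : -(((√t)⁻¹ • y) ⬝ᵥ (Q⁻¹ *ᵥ ((√t)⁻¹ • y))) / 2 =
      -(y ⬝ᵥ (Q⁻¹ *ᵥ y)) / (2 * t) := by
    rw [mulVec_smul, dotProduct_smul, smul_dotProduct, smul_smul, ← mul_inv,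
      Real.mul_self_sqrt ht.le, smul_eq_mul]
    field_simp
  simp_rw [smul_dotProduct, ← dotProduct_smul]
  rw [integral_exp_neg_dotProduct_mulVec_mul_cexp hQ, hscale, gaussianHeatKernel,
    ← sqrt_pow_mul_pow_mul_rpow_neg two_pi_pos ht]
  congr 1
  ring

end PosDefMatrix

section LocalExpansion

variable {X : Type*}

lemma exists_eventually_norm_le_exp_neg_mul_of_norm_lt_one {l : Filter X} {φ : X → ℂ} {q : X → ℝ}
    {z : ℂ} {a : ℝ} (hφ : Tendsto φ l (𝓝 z)) (hq : Tendsto q l (𝓝 a)) (hz : ‖z‖ < 1) :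
    ∃ c > 0, ∀ᶠ x in l, ‖φ x‖ ≤ exp (-(c * q x)) := by
  obtain ⟨c, hc, hca⟩ := exists_pos_mul_lt (sub_pos.mpr hz) a
  refine ⟨c, hc, ?_⟩
  filter_upwards [hφ.norm.eventually_lt ((hq.const_mul c).const_sub 1) (by linarith)] with x hx
  linarith [add_one_le_exp (-(c * q x))]

lemma eventually_norm_le_exp_neg_mul_of_isLittleO {l : Filter X} {φ : X → ℂ} {q : X → ℝ}
    (hq_nonneg : ∀ x, 0 ≤ q x) (hq : Tendsto q l (𝓝 0))
    (hφ : (fun x => φ x - (1 - q x / 2)) =o[l] q) :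
    ∀ᶠ x in l, ‖φ x‖ ≤ exp (-(1 / 4 * q x)) := by
  filter_upwards [hφ.bound (show (0 : ℝ) < 1 / 4 by norm_num),
    hq.eventually_le_const (show (0 : ℝ) < 2 by norm_num)] with x hx hx2
  have hmain : ‖(1 - q x / 2 : ℂ)‖ = 1 - q x / 2 := by
    rw [show (1 - q x / 2 : ℂ) = ((1 - q x / 2 : ℝ) : ℂ) by push_cast; rfl,
      Complex.norm_of_nonneg (by linarith)]
  rw [Real.norm_of_nonneg (hq_nonneg x)] at hx
  calc ‖φ x‖ ≤ ‖φ x - (1 - q x / 2)‖ + ‖(1 - q x / 2 : ℂ)‖ := norm_le_norm_sub_add _ _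
    _ ≤ -(1 / 4 * q x) + 1 := by linarith
    _ ≤ exp (-(1 / 4 * q x)) := add_one_le_exp _

lemma exists_norm_le_exp_neg_mul [TopologicalSpace X] {K : Set X} {φ : X → ℂ} {q : X → ℝ}
    {x₀ : X} (hK : IsCompact K) (hφ : ContinuousOn φ K) (hq : ContinuousOn q K)
    (hq_nonneg : ∀ x, 0 ≤ q x) (hq_zero : q x₀ = 0) (hφ_lt : ∀ x ∈ K, x ≠ x₀ → ‖φ x‖ < 1)
    (hexp : (fun x => φ x - (1 - q x / 2)) =o[𝓝[K] x₀] q) :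
    ∃ c > 0, ∀ x ∈ K, ‖φ x‖ ≤ exp (-(c * q x)) := by
  have hmono {c c' : ℝ} (hc : c' ≤ c) {x : X} (hx : ‖φ x‖ ≤ exp (-(c * q x))) :
      ‖φ x‖ ≤ exp (-(c' * q x)) :=
    hx.trans (exp_le_exp.mpr (neg_le_neg (mul_le_mul_of_nonneg_right hc (hq_nonneg x))))
  refine hK.induction_on (p := fun s => ∃ c > 0, ∀ x ∈ s, ‖φ x‖ ≤ exp (-(c * q x)))
    ⟨1, one_pos, by simp⟩ (fun s t hst ⟨c, hc, ht⟩ => ⟨c, hc, fun x hx => ht x (hst hx)⟩) ?_ ?_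
  · rintro s t ⟨c, hc, hs⟩ ⟨c', hc', ht⟩
    refine ⟨min c c', lt_min hc hc', fun x hx => ?_⟩
    exact hx.elim (fun h => hmono (min_le_left ..) (hs x h))
      fun h => hmono (min_le_right ..) (ht x h)
  · intro x hx
    obtain ⟨c, hc, hxc⟩ : ∃ c > 0, ∀ᶠ y in 𝓝[K] x, ‖φ y‖ ≤ exp (-(c * q y)) := by
      obtain rfl | hne := eq_or_ne x x₀
      · have hq₀ : Tendsto q (𝓝[K] x) (𝓝 0) := hq_zero ▸ hq x hx
        exact ⟨1 / 4, by norm_num, eventually_norm_le_exp_neg_mul_of_isLittleO hq_nonneg hq₀ hexp⟩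
      · exact exists_eventually_norm_le_exp_neg_mul_of_norm_lt_one (hφ x hx) (hq x hx)
          (hφ_lt x hx hne)
    exact ⟨_, hxc, c, hc, fun y hy => hy⟩

lemma tendsto_inv_sqrt_natCast_smul {E : Type*} [AddCommGroup E] [TopologicalSpace E] [Module ℝ E]
    [ContinuousSMul ℝ E] (x : E) : Tendsto (fun n : ℕ => (√n)⁻¹ • x) atTop (𝓝 0) := by
  have hsqrt : Tendsto (fun n : ℕ => (√n)⁻¹) atTop (𝓝 0) :=
    tendsto_inv_atTop_zero.comp (tendsto_sqrt_atTop.comp tendsto_natCast_atTop_atTop)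
  simpa using hsqrt.smul_const x

lemma comp_inv_sqrt_smul_eq_div {E : Type*} [AddCommGroup E] [Module ℝ E] {q : E → ℝ}
    (hq : ∀ (r : ℝ) x, q (r • x) = r ^ 2 * q x) {t : ℝ} (ht : 0 ≤ t) (x : E) :
    q ((√t)⁻¹ • x) = q x / t := by
  rw [hq, inv_pow, sq_sqrt ht, inv_mul_eq_div]

lemma tendsto_pow_inv_sqrt_smul {E : Type*} [AddCommGroup E] [TopologicalSpace E] [Module ℝ E]
    [ContinuousSMul ℝ E] {φ : E → ℂ} {q : E → ℝ} (hq : ∀ (r : ℝ) x, q (r • x) = r ^ 2 * q x)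
    (hφ : (fun x => φ x - (1 - q x / 2)) =o[𝓝 0] q) (x : E) :
    Tendsto (fun n : ℕ => φ ((√n)⁻¹ • x) ^ n) atTop (𝓝 (exp (-q x / 2) : ℂ)) := by
  rw [Complex.ofReal_exp]
  refine Complex.tendsto_pow_exp_of_isLittleO_sub_add_div _ ?_
  have hscale (n : ℕ) : q ((√n)⁻¹ • x) = q x / n :=
    comp_inv_sqrt_smul_eq_div hq n.cast_nonneg x
  have hdiv : (fun n : ℕ => q x / n) =O[atTop] fun n : ℕ => (1 / n : ℂ) :=
    .of_bound ‖q x‖ (.of_forall fun n => by simp [div_eq_mul_inv])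
  have hφn := hφ.comp_tendsto (tendsto_inv_sqrt_natCast_smul x)
  refine (hφn.congr (fun n => ?_) hscale).trans_isBigO hdiv
  simp only [Function.comp_apply, hscale]
  push_cast
  ring

end LocalExpansion

lemma norm_integral_mul_sub_integral_mul_le {α 𝕜 : Type*} [RCLike 𝕜]
    [MeasurableSpace α] {ν : Measure α} {f g e : α → 𝕜} (hf : Integrable f ν) (hg : Integrable g ν)
    (he : AEStronglyMeasurable e ν) (he_norm : ∀ x, ‖e x‖ = 1) :
    ‖∫ x, f x * e x ∂ν - ∫ x, g x * e x ∂ν‖ ≤ ∫ x, ‖f x - g x‖ ∂ν := by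
  have hbound : ∀ᵐ x ∂ν, ‖e x‖ ≤ 1 := .of_forall fun x => (he_norm x).le
  rw [← integral_sub (hf.mul_bdd he hbound) (hg.mul_bdd he hbound)]
  refine (norm_integral_le_integral_norm _).trans_eq (integral_congr_ae (.of_forall fun x => ?_))
  simp only [← sub_mul, norm_mul, he_norm, mul_one]

section DiffusiveScaling

variable {E : Type*} [AddCommGroup E] [Module ℝ E]

/-- The `n`-th power of `φ`, cut off outside `K` and rescaled to the diffusive scale `√n`. With
`φ` the characteristic function of a step distribution and `K` a fundamental domain of frequencies,
this is the function whose Fourier transform is the law after `n` steps, seen at scale `√n`. -/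
def diffusivePow (K : Set E) (φ : E → ℂ) (n : ℕ) (x : E) : ℂ :=
  K.indicator (fun ξ => φ ξ ^ n) ((√n)⁻¹ • x)

variable {K : Set E} {φ : E → ℂ} {q : E → ℝ} {n : ℕ}

lemma norm_diffusivePow_le {c : ℝ} (hq : ∀ (r : ℝ) x, q (r • x) = r ^ 2 * q x)
    (hφ : ∀ x ∈ K, ‖φ x‖ ≤ exp (-(c * q x))) (hn : n ≠ 0) (x : E) :
    ‖diffusivePow K φ n x‖ ≤ exp (-(c * q x)) := by
  rw [diffusivePow, norm_indicator_eq_indicator_norm]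
  refine Set.indicator_apply_le' (fun hx => ?_) fun _ => (exp_pos _).le
  calc ‖φ ((√n)⁻¹ • x) ^ n‖ ≤ exp (-(c * q ((√n)⁻¹ • x))) ^ n := by
        rw [norm_pow]
        exact pow_le_pow_left₀ (norm_nonneg _) (hφ _ hx) n
    _ = exp (-(c * q x)) := by
        rw [← exp_nat_mul, comp_inv_sqrt_smul_eq_div hq n.cast_nonneg]
        congr 1
        field_simp

lemma tendsto_diffusivePow [TopologicalSpace E] [ContinuousSMul ℝ E] (hK : K ∈ 𝓝 0)
    (hq : ∀ (r : ℝ) x, q (r • x) = r ^ 2 * q x)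
    (hφ : (fun x => φ x - (1 - q x / 2)) =o[𝓝 0] q) (x : E) :
    Tendsto (fun n => diffusivePow K φ n x) atTop (𝓝 (exp (-q x / 2) : ℂ)) := by
  refine (tendsto_pow_inv_sqrt_smul hq hφ x).congr' ?_
  filter_upwards [(tendsto_inv_sqrt_natCast_smul x).eventually hK] with n hn
  exact (Set.indicator_of_mem hn fun ξ => φ ξ ^ n).symm

end DiffusiveScaling

section DiffusiveScalingIntegral

variable {E : Type*} [NormedAddCommGroup E] [NormedSpace ℝ E] [FiniteDimensional ℝ E]
  [MeasurableSpace E] [BorelSpace E] {μ : Measure E} [μ.IsAddHaarMeasure] {K : Set E} {φ : E → ℂ}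
  {q : E → ℝ} {n : ℕ}

lemma integrable_diffusivePow (hK : IsCompact K) (hφ : ContinuousOn φ K) (hn : n ≠ 0) :
    Integrable (diffusivePow K φ n) μ := by
  have hφn : Integrable (K.indicator fun ξ => φ ξ ^ n) μ :=
    (integrable_indicator_iff hK.measurableSet).mpr ((hφ.pow n).integrableOn_compact hK)
  exact hφn.comp_smul (inv_ne_zero (by positivity))

lemma integral_diffusivePow_mul (hK : MeasurableSet K) (n : ℕ) (g : E → ℂ) :
    ∫ x, diffusivePow K φ n x * g ((√n)⁻¹ • x) ∂μ =
      √n ^ Module.finrank ℝ E * ∫ ξ in K, φ ξ ^ n * g ξ ∂μ := by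
  have hscale := Measure.integral_comp_inv_smul_of_nonneg μ
    (K.indicator fun ξ => φ ξ ^ n * g ξ) (sqrt_nonneg n)
  rw [integral_indicator hK] at hscale
  rw [← Complex.ofReal_pow, ← Complex.real_smul, ← hscale]
  refine integral_congr_ae (.of_forall fun x => ?_)
  exact (Set.indicator_mul_left K (fun ξ => φ ξ ^ n) g).symm

lemma tendsto_integral_norm_diffusivePow_sub (hK : IsCompact K) (hK₀ : K ∈ 𝓝 0)
    (hφ : ContinuousOn φ K) (hφ_lt : ∀ x ∈ K, x ≠ 0 → ‖φ x‖ < 1) (hq : Continuous q)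
    (hq_nonneg : ∀ x, 0 ≤ q x) (hq_smul : ∀ (r : ℝ) x, q (r • x) = r ^ 2 * q x)
    (hexp : (fun x => φ x - (1 - q x / 2)) =o[𝓝 0] q)
    (hint : ∀ c > 0, Integrable (fun x => exp (-(c * q x))) μ) :
    Tendsto (fun n => ∫ x, ‖diffusivePow K φ n x - exp (-q x / 2)‖ ∂μ) atTop (𝓝 0) := by
  have hq_zero : q 0 = 0 := by simpa using hq_smul 0 0
  obtain ⟨c, hc, hφc⟩ := exists_norm_le_exp_neg_mul hK hφ hq.continuousOn hq_nonneg hq_zero hφ_lt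
    (hexp.mono nhdsWithin_le_nhds)
  have hgauss : Integrable (fun x => exp (-q x / 2)) μ := by
    simpa only [neg_div, one_div_mul_eq_div] using hint (1 / 2) (by norm_num)
  rw [← integral_zero E ℝ (μ := μ)]
  refine tendsto_integral_filter_of_dominated_convergence
    (fun x => exp (-(c * q x)) + exp (-q x / 2)) ?_ ?_ ((hint c hc).add hgauss)
    (.of_forall fun x => ?_)
  · filter_upwards [eventually_ne_atTop 0] with n hn
    exact ((integrable_diffusivePow hK hφ hn).sub hgauss.ofReal).norm.aestronglyMeasurable
  · filter_upwards [eventually_ne_atTop 0] with n hn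
    refine .of_forall fun x => ?_
    rw [norm_norm]
    refine (norm_sub_le _ _).trans (add_le_add (norm_diffusivePow_le hq_smul hφc hn x) ?_)
    rw [Complex.norm_of_nonneg (exp_pos _).le]
  · exact tendsto_iff_norm_sub_tendsto_zero.mp (tendsto_diffusivePow hK₀ hq_smul hexp x)

end DiffusiveScalingIntegral

lemma norm_cexp_I_mul_sub_le (x : ℝ) :
    ‖Complex.exp (Complex.I * x) - (1 + Complex.I * x - x ^ 2 / 2)‖ ≤ 4 * (x ^ 2 * min 1 |x|) := by
  have hnorm : ‖Complex.I * x‖ = |x| := by simp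
  obtain hx | hx := le_total |x| 1
  · have hpoly : ∑ m ∈ Finset.range 3, (Complex.I * x) ^ m / (m.factorial : ℂ) =
        1 + Complex.I * x - x ^ 2 / 2 := by
      simp only [Finset.sum_range_succ, Finset.sum_range_zero, mul_pow, Complex.I_sq,
        Nat.factorial]
      push_cast
      ring
    have hbound := Complex.exp_bound (hnorm.trans_le hx) (n := 3) (by norm_num)
    rw [hpoly, hnorm] at hbound
    rw [min_eq_right hx, ← sq_abs x, ← pow_succ]
    calc _ ≤ |x| ^ 3 * (4 * (6 * 3 : ℝ)⁻¹) := by simpa [Nat.factorial] using hbound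
      _ ≤ 4 * |x| ^ 3 := by linarith [pow_nonneg (abs_nonneg x) 3]
  · have hpoly : ‖1 + Complex.I * x - x ^ 2 / 2‖ ≤ 1 + |x| + |x| ^ 2 / 2 :=
      calc ‖1 + Complex.I * x - x ^ 2 / 2‖ ≤ ‖1 + Complex.I * x‖ + ‖(x ^ 2 / 2 : ℂ)‖ :=
            norm_sub_le _ _
        _ ≤ ‖(1 : ℂ)‖ + ‖Complex.I * x‖ + ‖(x ^ 2 / 2 : ℂ)‖ := by gcongr; exact norm_add_le _ _
        _ = 1 + |x| + |x| ^ 2 / 2 := by simp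
    calc ‖Complex.exp (Complex.I * x) - (1 + Complex.I * x - x ^ 2 / 2)‖
        ≤ ‖Complex.exp (Complex.I * x)‖ + ‖1 + Complex.I * x - x ^ 2 / 2‖ := norm_sub_le _ _
      _ ≤ 1 + (1 + |x| + |x| ^ 2 / 2) := by
          rw [Complex.norm_exp_I_mul_ofReal]
          gcongr
      _ ≤ 4 * (x ^ 2 * min 1 |x|) := by
          rw [min_eq_left hx, ← sq_abs x]
          nlinarith

lemma tendsto_tsum_mul_min_one_abs {β : Type*} {a : β → ℝ} (ha : Summable a) (b : β → ℝ) :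
    Tendsto (fun ε => ∑' i, a i * min 1 |ε * b i|) (𝓝 0) (𝓝 0) := by
  rw [← tsum_zero (α := ℝ) (β := β)]
  refine tendsto_tsum_of_dominated_convergence ha.norm (fun i => ?_) (.of_forall fun ε i => ?_)
  · have hcont : Continuous fun ε => a i * min 1 |ε * b i| := by fun_prop
    simpa using hcont.tendsto 0
  · rw [norm_mul, Real.norm_of_nonneg (le_min zero_le_one (abs_nonneg _))]
    exact mul_le_of_le_one_right (norm_nonneg _) (min_le_left _ _)

section LatticeCharacter

variable {ι : Type*}

/-- The coordinatewise inclusion of the lattice `ℤ^ι` into `ℝ^ι`. -/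
def intCastVec (v : ι → ℤ) : ι → ℝ := fun i => v i

lemma norm_intCastVec [Fintype ι] (v : ι → ℤ) : ‖intCastVec v‖ = ‖v‖ := rfl

lemma one_le_norm_of_ne_zero [Fintype ι] {v : ι → ℤ} (hv : v ≠ 0) : 1 ≤ ‖v‖ := by
  obtain ⟨i, hi⟩ := Function.ne_iff.mp hv
  refine le_trans ?_ (norm_le_pi_norm v i)
  rw [Int.norm_eq_abs]
  exact_mod_cast Int.one_le_abs hi

/-- The cube `[-π, π]^ι` of frequencies, a fundamental domain (up to null sets) of the torus dual to
the lattice `ℤ^ι`. -/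
def frequencyCube (ι : Type*) : Set (ι → ℝ) := Set.univ.pi fun _ => Set.Icc (-π) π

lemma isCompact_frequencyCube : IsCompact (frequencyCube ι) :=
  isCompact_univ_pi fun _ => isCompact_Icc

lemma frequencyCube_mem_nhds_zero [Finite ι] : frequencyCube ι ∈ 𝓝 0 :=
  set_pi_mem_nhds Set.finite_univ fun _ _ => Icc_mem_nhds (neg_neg_of_pos pi_pos) pi_pos

variable [Fintype ι]

lemma abs_dotProduct_le_card_mul (x y : ι → ℝ) : |x ⬝ᵥ y| ≤ Fintype.card ι * (‖x‖ * ‖y‖) := by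
  calc |x ⬝ᵥ y| ≤ ∑ i, |x i * y i| := Finset.abs_sum_le_sum_abs _ _
    _ ≤ ∑ _i : ι, ‖x‖ * ‖y‖ := Finset.sum_le_sum fun i _ => by
        rw [abs_mul]
        exact mul_le_mul (norm_le_pi_norm x i) (norm_le_pi_norm y i) (abs_nonneg _) (norm_nonneg _)
    _ = Fintype.card ι * (‖x‖ * ‖y‖) := by simp

/-- The value at the frequency `ξ` of the character of the torus `ℝ^ι / (2πℤ)^ι` indexed by the
lattice point `v`. -/
def latticeChar (v : ι → ℤ) (ξ : ι → ℝ) : ℂ :=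
  Complex.exp (Complex.I * ↑(ξ ⬝ᵥ intCastVec v))

lemma latticeChar_neg (v : ι → ℤ) (ξ : ι → ℝ) :
    latticeChar (-v) ξ = Complex.exp (-(Complex.I * ↑(ξ ⬝ᵥ intCastVec v))) := by
  simp only [latticeChar, intCastVec, dotProduct, Pi.neg_apply]
  push_cast
  simp only [mul_neg, Finset.sum_neg_distrib]

lemma latticeChar_add (u v : ι → ℤ) (ξ : ι → ℝ) :
    latticeChar (u + v) ξ = latticeChar u ξ * latticeChar v ξ := by
  simp only [latticeChar, ← Complex.exp_add, ← mul_add, ← Complex.ofReal_add, ← dotProduct_add]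
  congr 4
  ext i
  simp [intCastVec]

lemma norm_latticeChar (v : ι → ℤ) (ξ : ι → ℝ) : ‖latticeChar v ξ‖ = 1 :=
  Complex.norm_exp_I_mul_ofReal _

lemma norm_mul_latticeChar (c : ℂ) (v : ι → ℤ) (ξ : ι → ℝ) : ‖c * latticeChar v ξ‖ = ‖c‖ := by
  rw [norm_mul, norm_latticeChar, mul_one]

lemma continuous_latticeChar (v : ι → ℤ) : Continuous (latticeChar v) := by
  unfold latticeChar dotProduct
  fun_prop

lemma latticeChar_eq_prod (v : ι → ℤ) (ξ : ι → ℝ) :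
    latticeChar v ξ = ∏ i, Complex.exp (Complex.I * v i * ξ i) := by
  rw [latticeChar, ← Complex.exp_sum]
  simp only [dotProduct, intCastVec, Complex.ofReal_sum, Finset.mul_sum]
  push_cast
  congr! 2 with i
  ring

lemma norm_mul_latticeChar_sub_le (c : ℝ) (v : ι → ℤ) (ξ : ι → ℝ) :
    ‖(c : ℂ) * (latticeChar v ξ -
        (1 + Complex.I * ↑(ξ ⬝ᵥ intCastVec v) - ↑(ξ ⬝ᵥ intCastVec v) ^ 2 / 2))‖ ≤
      ‖ξ‖ ^ 2 *
        (4 * Fintype.card ι ^ 2 * (|c| * ‖v‖ ^ 2) * min 1 |‖ξ‖ * (Fintype.card ι * ‖v‖)|) := by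
  have hdot : |ξ ⬝ᵥ intCastVec v| ≤ |‖ξ‖ * (Fintype.card ι * ‖v‖)| := by
    rw [abs_of_nonneg (a := ‖ξ‖ * (Fintype.card ι * ‖v‖)) (by positivity)]
    refine (abs_dotProduct_le_card_mul ξ (intCastVec v)).trans_eq ?_
    rw [norm_intCastVec]
    ring
  rw [norm_mul, Complex.norm_real, Real.norm_eq_abs]
  calc |c| * ‖latticeChar v ξ - _‖
      ≤ |c| * (4 * ((ξ ⬝ᵥ intCastVec v) ^ 2 * min 1 |ξ ⬝ᵥ intCastVec v|)) := by
        gcongr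
        exact norm_cexp_I_mul_sub_le _
    _ ≤ |c| * (4 * ((‖ξ‖ * (Fintype.card ι * ‖v‖)) ^ 2 *
          min 1 |‖ξ‖ * (Fintype.card ι * ‖v‖)|)) := by
        have hsq := sq_le_sq.mpr hdot
        gcongr
    _ = ‖ξ‖ ^ 2 *
          (4 * Fintype.card ι ^ 2 * (|c| * ‖v‖ ^ 2) * min 1 |‖ξ‖ * (Fintype.card ι * ‖v‖)|) := by
        ring

lemma integral_Icc_exp_I_mul_intCast_mul (k : ℤ) :
    ∫ x in Set.Icc (-π) π, Complex.exp (Complex.I * k * x) =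
      if k = 0 then (2 * π : ℂ) else 0 := by
  rw [integral_Icc_eq_integral_Ioc, ← intervalIntegral.integral_of_le (by linarith [pi_pos])]
  split_ifs with hk
  · simp only [hk, Int.cast_zero, mul_zero, zero_mul, Complex.exp_zero,
      intervalIntegral.integral_const, sub_neg_eq_add, Complex.real_smul]
    push_cast
    ring
  · rw [integral_exp_mul_complex (by simp [hk]), div_eq_zero_iff, sub_eq_zero]
    exact .inl (Complex.exp_eq_exp_iff_exists_int.mpr ⟨k, by push_cast; ring⟩)

lemma integral_frequencyCube_latticeChar (v : ι → ℤ) :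
    ∫ ξ in frequencyCube ι, latticeChar v ξ =
      if v = 0 then (2 * π : ℂ) ^ Fintype.card ι else 0 := by
  simp_rw [latticeChar_eq_prod]
  rw [frequencyCube, volume_pi, Measure.restrict_pi_pi,
    integral_fintype_prod_eq_prod (f := fun i (x : ℝ) => Complex.exp (Complex.I * v i * x))]
  simp_rw [integral_Icc_exp_I_mul_intCast_mul]
  split_ifs with hv
  · simp [hv]
  · obtain ⟨i, hi⟩ := Function.ne_iff.mp hv
    exact Finset.prod_eq_zero (Finset.mem_univ i) (if_neg hi)

end LatticeCharacter

section SummableSteps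

variable {ι : Type*} [Fintype ι] {ω : (ι → ℤ) → ℝ}

lemma summable_of_abs_le_mul_norm_sq (hω : Summable fun v => ω v * ‖v‖ ^ 2) {f : (ι → ℤ) → ℝ}
    (hf : ∀ v ≠ 0, |f v| ≤ |ω v| * ‖v‖ ^ 2) : Summable f := by
  refine .of_norm_bounded_eventually hω.norm ?_
  filter_upwards [(Set.finite_singleton (0 : ι → ℤ)).compl_mem_cofinite] with v hv
  simpa using hf v hv

lemma summable_of_summable_mul_norm_sq (hω : Summable fun v => ω v * ‖v‖ ^ 2) : Summable ω :=
  summable_of_abs_le_mul_norm_sq hω fun _ hv =>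
    le_mul_of_one_le_right (abs_nonneg _) (one_le_pow₀ (one_le_norm_of_ne_zero hv))

lemma abs_intCast_le_norm (v : ι → ℤ) (i : ι) : |(v i : ℝ)| ≤ ‖v‖ :=
  norm_le_pi_norm v i

lemma summable_mul_apply (hω : Summable fun v => ω v * ‖v‖ ^ 2) (i : ι) :
    Summable fun v => ω v * (v i : ℝ) :=
  summable_of_abs_le_mul_norm_sq hω fun v hv => by
    rw [abs_mul]
    gcongr
    exact (abs_intCast_le_norm v i).trans
      (le_self_pow₀ (one_le_norm_of_ne_zero hv) two_ne_zero)

lemma summable_mul_apply_mul_apply (hω : Summable fun v => ω v * ‖v‖ ^ 2) (i j : ι) :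
    Summable fun v => ω v * (v i : ℝ) * (v j : ℝ) :=
  summable_of_abs_le_mul_norm_sq hω fun v _ => by
    rw [abs_mul, abs_mul, mul_assoc, sq]
    gcongr <;> exact abs_intCast_le_norm v _

lemma hasSum_mul_dotProduct (hω : Summable fun v => ω v * ‖v‖ ^ 2) (ξ : ι → ℝ) :
    HasSum (fun v => ω v * (ξ ⬝ᵥ intCastVec v))
      (ξ ⬝ᵥ fun i => ∑' v : ι → ℤ, ω v * (v i : ℝ)) := by
  have h : HasSum _ (ξ ⬝ᵥ fun i => ∑' v : ι → ℤ, ω v * (v i : ℝ)) :=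
    hasSum_sum fun i _ => (summable_mul_apply hω i).hasSum.mul_left (ξ i)
  convert h using 2 with v
  simp only [dotProduct, intCastVec, Finset.mul_sum]
  exact Finset.sum_congr rfl fun i _ => by ring

end SummableSteps

section LatticeWalk

variable {d : ℕ} {ω : (Fin d → ℤ) → ℝ}

lemma hasSum_mul_dotProduct_sq (hω : Summable fun v => ω v * ‖v‖ ^ 2) (ξ : Fin d → ℝ) :
    HasSum (fun v => ω v * (ξ ⬝ᵥ intCastVec v) ^ 2)
      (ξ ⬝ᵥ (covQ d ω *ᵥ ξ)) := by
  have hrow (i : Fin d) :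
      HasSum (fun v => ∑ j, ω v * (v i : ℝ) * (v j : ℝ) * ξ j) ((covQ d ω *ᵥ ξ) i) :=
    hasSum_sum fun j _ => (summable_mul_apply_mul_apply hω i j).hasSum.mul_right (ξ j)
  have h : HasSum _ (ξ ⬝ᵥ (covQ d ω *ᵥ ξ)) := hasSum_sum fun i _ => (hrow i).mul_left (ξ i)
  convert h using 2 with v
  simp only [dotProduct, intCastVec, sq, Finset.mul_sum, Finset.sum_mul]
  exact Finset.sum_congr rfl fun i _ => Finset.sum_congr rfl fun j _ => by ring

lemma hasSum_ftOmega (hω : Summable ω) (ξ : Fin d → ℝ) :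
    HasSum (fun v => (ω v : ℂ) * latticeChar v ξ) (ftOmega ω ξ) :=
  Summable.hasSum (.of_norm_bounded hω.norm fun v => by
    rw [norm_mul_latticeChar, Complex.norm_real])

lemma continuous_ftOmega (hω : Summable ω) : Continuous (ftOmega ω) := by
  refine continuous_tsum (u := fun v => ‖ω v‖) (fun v => ?_) hω.norm fun v ξ => ?_
  · exact (continuous_latticeChar v).const_mul _
  · exact ((norm_mul_latticeChar ..).trans (Complex.norm_real _)).le

lemma hasSum_ftOmega_sub (hω : Summable fun v => ω v * ‖v‖ ^ 2)
    (hmass : ∑' v : Fin d → ℤ, ω v = 1) (hcent : ∀ i, ∑' v : Fin d → ℤ, ω v * (v i : ℝ) = 0)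
    (ξ : Fin d → ℝ) :
    HasSum (fun v => (ω v : ℂ) * (latticeChar v ξ -
        (1 + Complex.I * ↑(ξ ⬝ᵥ intCastVec v) - ↑(ξ ⬝ᵥ intCastVec v) ^ 2 / 2)))
      (ftOmega ω ξ - (1 - ↑(ξ ⬝ᵥ (covQ d ω *ᵥ ξ)) / 2)) := by
  have hω' := summable_of_summable_mul_norm_sq hω
  have hmean : HasSum (fun v => ω v * (ξ ⬝ᵥ intCastVec v)) 0 := by
    have h := hasSum_mul_dotProduct hω ξ
    simp_rw [hcent] at h
    rwa [show (fun _ => 0 : Fin d → ℝ) = 0 from rfl, dotProduct_zero] at h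
  have htaylor := ((Complex.hasSum_ofReal.mpr (hmass ▸ hω'.hasSum)).add
    ((Complex.hasSum_ofReal.mpr hmean).mul_left Complex.I)).sub
    ((Complex.hasSum_ofReal.mpr (hasSum_mul_dotProduct_sq hω ξ)).div_const 2)
  have h := (hasSum_ftOmega hω' ξ).sub htaylor
  rw [Complex.ofReal_zero, mul_zero, add_zero, Complex.ofReal_one] at h
  refine HasSum.congr_fun h fun v => ?_
  push_cast
  ring

lemma ftOmega_sub_isLittleO_norm_sq (hω : Summable fun v => ω v * ‖v‖ ^ 2)
    (hmass : ∑' v : Fin d → ℤ, ω v = 1) (hcent : ∀ i, ∑' v : Fin d → ℤ, ω v * (v i : ℝ) = 0) :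
    (fun ξ => ftOmega ω ξ - (1 - ↑(ξ ⬝ᵥ (covQ d ω *ᵥ ξ)) / 2)) =o[𝓝 0] fun ξ => ‖ξ‖ ^ 2 := by
  have ha : Summable fun v : Fin d → ℤ => 4 * (d : ℝ) ^ 2 * (|ω v| * ‖v‖ ^ 2) := by
    refine (hω.norm.congr fun v => ?_).mul_left _
    simp
  have hlim := (tendsto_tsum_mul_min_one_abs ha fun v => d * ‖v‖).comp
    (tendsto_norm_zero (E := Fin d → ℝ))
  have hbound (ξ : Fin d → ℝ) : ‖ftOmega ω ξ - (1 - ↑(ξ ⬝ᵥ (covQ d ω *ᵥ ξ)) / 2)‖ ≤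
      ‖ξ‖ ^ 2 * ∑' v, 4 * (d : ℝ) ^ 2 * (|ω v| * ‖v‖ ^ 2) * min 1 |‖ξ‖ * (d * ‖v‖)| := by
    refine (hasSum_ftOmega_sub hω hmass hcent ξ).norm_le_of_bounded
      (Summable.hasSum ?_ |>.mul_left _) fun v => by
        simpa only [Fintype.card_fin] using norm_mul_latticeChar_sub_le (ω v) v ξ
    refine .of_norm_bounded ha fun v => ?_
    rw [norm_mul, Real.norm_of_nonneg (by positivity), Real.norm_of_nonneg (by positivity)]
    exact mul_le_of_le_one_right (by positivity) (min_le_left _ _)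
  refine Asymptotics.IsLittleO.of_bound fun ε hε => ?_
  filter_upwards [hlim.eventually_le_const hε] with ξ hξ
  rw [norm_pow, norm_norm, mul_comm]
  exact (hbound ξ).trans (by gcongr; exact hξ)

lemma integral_frequencyCube_mul_ftOmega_mul_latticeChar (hω : Summable ω)
    {f : (Fin d → ℝ) → ℂ} (hf : IntegrableOn f (frequencyCube (Fin d))) (v : Fin d → ℤ) :
    ∫ ξ in frequencyCube (Fin d), f ξ * ftOmega ω ξ * latticeChar (-v) ξ =
      ∑' u, (ω u : ℂ) * ∫ ξ in frequencyCube (Fin d), f ξ * latticeChar (-(v - u)) ξ := by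
  have hint (u : Fin d → ℤ) : IntegrableOn (fun ξ => (ω u : ℂ) * (f ξ * latticeChar (-(v - u)) ξ))
      (frequencyCube (Fin d)) :=
    (hf.mul_bdd (continuous_latticeChar _).aestronglyMeasurable
      (.of_forall fun ξ => (norm_latticeChar _ ξ).le)).const_mul _
  have hsummable : Summable fun u => ∫ ξ in frequencyCube (Fin d),
      ‖(ω u : ℂ) * (f ξ * latticeChar (-(v - u)) ξ)‖ := by
    simp_rw [norm_mul, norm_latticeChar, mul_one, integral_const_mul, Complex.norm_real]
    exact hω.norm.mul_right _
  have hexpand (ξ : Fin d → ℝ) : f ξ * ftOmega ω ξ * latticeChar (-v) ξ =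
      ∑' u, (ω u : ℂ) * (f ξ * latticeChar (-(v - u)) ξ) := by
    rw [← (hasSum_ftOmega hω ξ).tsum_eq, ← tsum_mul_left, ← tsum_mul_right]
    refine tsum_congr fun u => ?_
    rw [show -(v - u) = u + -v by abel, latticeChar_add]
    ring
  simp_rw [hexpand]
  rw [← integral_tsum_of_summable_integral_norm hint hsummable]
  simp_rw [integral_const_mul]

lemma integral_frequencyCube_ftOmega_pow_mul_latticeChar (hω : Summable ω)
    {p : ℕ → (Fin d → ℤ) → ℝ} (hp0 : ∀ v, p 0 v = if v = 0 then 1 else 0)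
    (hp : ∀ n, p (n + 1) = latticeConv ω (p n)) (n : ℕ) (v : Fin d → ℤ) :
    ∫ ξ in frequencyCube (Fin d), ftOmega ω ξ ^ n * latticeChar (-v) ξ =
      (2 * π : ℂ) ^ d * p n v := by
  induction n generalizing v with
  | zero =>
    simp only [pow_zero, one_mul, integral_frequencyCube_latticeChar, hp0, neg_eq_zero,
      Fintype.card_fin]
    split_ifs <;> simp
  | succ n ih =>
    have hint : IntegrableOn (fun ξ => ftOmega ω ξ ^ n) (frequencyCube (Fin d)) :=
      ((continuous_ftOmega hω).pow n).continuousOn.integrableOn_compact isCompact_frequencyCube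
    have hconv : p (n + 1) v = ∑' u, ω u * p n (v - u) := by
      rw [hp, latticeConv, ← (Equiv.subLeft v).tsum_eq]
      simp
    simp_rw [pow_succ, integral_frequencyCube_mul_ftOmega_mul_latticeChar hω hint, ih, hconv,
      Complex.ofReal_tsum, ← tsum_mul_left]
    push_cast
    exact tsum_congr fun u => by ring

lemma rpow_mul_abs_sub_gaussianHeatKernel_le (hω : Summable ω) (hQ : (covQ d ω).PosDef)
    {p : ℕ → (Fin d → ℤ) → ℝ} (hp0 : ∀ v, p 0 v = if v = 0 then 1 else 0)
    (hp : ∀ n, p (n + 1) = latticeConv ω (p n)) {n : ℕ} (hn : n ≠ 0) (v : Fin d → ℤ) :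
    (n : ℝ) ^ ((d : ℝ) / 2) * |p n v - gaussianHeatKernel (covQ d ω) n (intCastVec v)| ≤
      ((2 * π) ^ d)⁻¹ * ∫ x, ‖diffusivePow (frequencyCube (Fin d)) (ftOmega ω) n x -
        exp (-(x ⬝ᵥ (covQ d ω *ᵥ x)) / 2)‖ := by
  have hn' : (0 : ℝ) < n := by positivity
  have hwalk : ∫ x, diffusivePow (frequencyCube (Fin d)) (ftOmega ω) n x *
      latticeChar (-v) ((√n)⁻¹ • x) = ((√n ^ d * ((2 * π) ^ d * p n v) : ℝ) : ℂ) := by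
    rw [integral_diffusivePow_mul isCompact_frequencyCube.measurableSet,
      integral_frequencyCube_ftOmega_pow_mul_latticeChar hω hp0 hp, Module.finrank_fin_fun]
    push_cast
    rfl
  have hheat : ∫ x, (exp (-(x ⬝ᵥ (covQ d ω *ᵥ x)) / 2) : ℂ) * latticeChar (-v) ((√n)⁻¹ • x) =
      ((√n ^ d * ((2 * π) ^ d * gaussianHeatKernel (covQ d ω) n (intCastVec v)) : ℝ) : ℂ) := by
    simp_rw [latticeChar_neg, integral_exp_neg_mul_cexp_eq_gaussianHeatKernel hQ hn',
      Fintype.card_fin]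
  have hgauss : Integrable fun x => exp (-(x ⬝ᵥ (covQ d ω *ᵥ x)) / 2) := by
    simpa only [neg_div, one_div, inv_mul_eq_div] using
      integrable_exp_neg_mul_dotProduct_mulVec hQ one_half_pos
  have hgauss' : Integrable fun x => (exp (-(x ⬝ᵥ (covQ d ω *ᵥ x)) / 2) : ℂ) := hgauss.ofReal
  have hchar : Continuous fun x : Fin d → ℝ => latticeChar (-v) ((√n)⁻¹ • x) :=
    (continuous_latticeChar _).comp (continuous_const_smul _)
  have hL1 := norm_integral_mul_sub_integral_mul_le
    (integrable_diffusivePow isCompact_frequencyCube (continuous_ftOmega hω).continuousOn hn)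
    hgauss' hchar.aestronglyMeasurable fun x => norm_latticeChar _ _
  rw [hwalk, hheat, ← Complex.ofReal_sub, Complex.norm_real, ← mul_sub, ← mul_sub, norm_mul,
    norm_mul, Real.norm_of_nonneg (by positivity), Real.norm_of_nonneg (by positivity)] at hL1
  rw [le_inv_mul_iff₀ (by positivity), Real.rpow_div_two_eq_sqrt _ hn'.le, Real.rpow_natCast,
    mul_left_comm]
  exact hL1

lemma tendsto_integral_norm_diffusivePow_ftOmega_sub (hω : Summable fun v => ω v * ‖v‖ ^ 2)
    (hmass : ∑' v : Fin d → ℤ, ω v = 1) (hcent : ∀ i, ∑' v : Fin d → ℤ, ω v * (v i : ℝ) = 0)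
    (hQ : (covQ d ω).PosDef)
    (haper : ∀ ξ ∈ frequencyCube (Fin d), ξ ≠ 0 → ‖ftOmega ω ξ‖ < 1) :
    Tendsto (fun n => ∫ x, ‖diffusivePow (frequencyCube (Fin d)) (ftOmega ω) n x -
      exp (-(x ⬝ᵥ (covQ d ω *ᵥ x)) / 2)‖) atTop (𝓝 0) := by
  have hcont : Continuous fun ξ => ξ ⬝ᵥ (covQ d ω *ᵥ ξ) := by fun_prop
  refine tendsto_integral_norm_diffusivePow_sub isCompact_frequencyCube frequencyCube_mem_nhds_zero
    (continuous_ftOmega (summable_of_summable_mul_norm_sq hω)).continuousOn haper hcont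
    (fun ξ => ?_) (fun c ξ => ?_)
    ((ftOmega_sub_isLittleO_norm_sq hω hmass hcent).trans_isBigO (norm_sq_isBigO_of_posDef hQ _))
    fun c hc => integrable_exp_neg_mul_dotProduct_mulVec hQ hc
  · simpa using hQ.posSemidef.dotProduct_mulVec_nonneg ξ
  · simp only [mulVec_smul, smul_dotProduct, dotProduct_smul, smul_eq_mul]
    ring

end LatticeWalk

theorem simple_gossip_local_clt_general
    (d : ℕ) (ω : (Fin d → ℤ) → ℝ) (hω : Summable fun v => ω v * ‖v‖ ^ 2)
    (hmass : ∑' v : Fin d → ℤ, ω v = 1)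
    (hcent : ∀ i, ∑' v : Fin d → ℤ, ω v * (v i : ℝ) = 0)
    (hQ : (covQ d ω).PosDef)
    (haper : ∀ ξ : Fin d → ℝ, (∀ i, ξ i ∈ Set.Icc (-π) π) → ξ ≠ 0 →
      ‖ftOmega ω ξ‖ < 1)
    (p : ℕ → (Fin d → ℤ) → ℝ)
    (hp0 : ∀ v, p 0 v = if v = 0 then 1 else 0)
    (hp : ∀ n, p (n + 1) = latticeConv ω (p n)) :
    Tendsto (fun n : ℕ => (n : ℝ) ^ ((d : ℝ) / 2) *
        ⨆ v : Fin d → ℤ, |p n v -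
          (2 * π * (n : ℝ)) ^ (-(d : ℝ) / 2) * (Real.sqrt (covQ d ω).det)⁻¹ *
            Real.exp (-((fun i => (v i : ℝ)) ⬝ᵥ ((covQ d ω)⁻¹ *ᵥ fun i => (v i : ℝ))) /
              (2 * (n : ℝ)))|)
      atTop (𝓝 0) := by
  have hlim := (tendsto_integral_norm_diffusivePow_ftOmega_sub hω hmass hcent hQ fun ξ hξ =>
    haper ξ fun i => hξ i (Set.mem_univ i)).const_mul ((2 * π) ^ d)⁻¹
  rw [mul_zero] at hlim
  refine squeeze_zero' (.of_forall fun n => ?_) ?_ hlim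
  · exact mul_nonneg (by positivity) (Real.iSup_nonneg fun v => abs_nonneg _)
  · filter_upwards [eventually_ne_atTop 0] with n hn
    rw [Real.mul_iSup_of_nonneg (by positivity)]
    refine ciSup_le fun v => ?_
    have hbound :=
      rpow_mul_abs_sub_gaussianHeatKernel_le (summable_of_summable_mul_norm_sq hω) hQ hp0 hp hn v
    rwa [gaussianHeatKernel, Fintype.card_fin] at hbound

/-- Local central limit theorem for simple gossip on ℤ^d. -/
theorem simple_gossip_local_clt
    (d : ℕ) (hd : 1 ≤ d) (ω : (Fin d → ℤ) → ℝ)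
    (hfin : (Function.support ω).Finite) (hnn : ∀ v, 0 ≤ ω v)
    (hmass : ∑' v : Fin d → ℤ, ω v = 1)
    (hcent : ∀ i, ∑' v : Fin d → ℤ, ω v * (v i : ℝ) = 0)
    (hQ : (covQ d ω).PosDef)
    (haper : ∀ ξ : Fin d → ℝ, (∀ i, ξ i ∈ Set.Icc (-π) π) → ξ ≠ 0 →
      ‖ftOmega ω ξ‖ < 1)
    (p : ℕ → (Fin d → ℤ) → ℝ)
    (hp0 : ∀ v, p 0 v = if v = 0 then 1 else 0)
    (hp : ∀ n, p (n + 1) = latticeConv ω (p n)) :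
    Tendsto (fun n : ℕ => (n : ℝ) ^ ((d : ℝ) / 2) *
        ⨆ v : Fin d → ℤ, |p n v -
          (2 * π * (n : ℝ)) ^ (-(d : ℝ) / 2) * (Real.sqrt (covQ d ω).det)⁻¹ *
            Real.exp (-((fun i => (v i : ℝ)) ⬝ᵥ ((covQ d ω)⁻¹ *ᵥ fun i => (v i : ℝ))) /
              (2 * (n : ℝ)))|)
      atTop (𝓝 0) := by
  exact simple_gossip_local_clt_general d ω
    (summable_of_hasFiniteSupport (hfin.subset (Function.support_mul_subset_left _ _)))
    hmass hcent hQ haper p hp0 hp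
end
end

section
/- Let α > d/2 − 1 be real and define u(t,y) = (Γ(α+1)/(π^{d/2} Γ(α+1−d/2) (det Q)^{1/2})) · t^{−2α} (t² − ⟨y, Q⁻¹y⟩)^{α−d/2} on the open region D = {(t,y) ∈ (0,∞)×ℝ^d : ⟨y, Q⁻¹y⟩ < t²}. Then u satisfies the Euler–Poisson–Darboux equation pointwise on D: ∂²u/∂t² + ((2α+1)/t) ∂u/∂t = ∑_{i,j=1}^d Q_{ij} ∂²u/∂y_i∂y_j for every (t,y) ∈ D. -/
open MeasureTheory Matrix Filter Topology Real

noncomputable section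

def epdSol (d : ℕ) (Q : Matrix (Fin d) (Fin d) ℝ) (α : ℝ) (t : ℝ) (y : Fin d → ℝ) : ℝ :=
  (Real.Gamma (α + 1) /
      (π ^ ((d : ℝ) / 2) * Real.Gamma (α + 1 - (d : ℝ) / 2) * Real.sqrt Q.det)) *
    t ^ (-(2 * α)) * (t ^ 2 - y ⬝ᵥ (Q⁻¹ *ᵥ y)) ^ (α - (d : ℝ) / 2)

/-!
Write `q(y) = ⟨y, Q⁻¹y⟩` and `w = t² - q(y)`, and consider `u(t, y) = t ^ (-2α) P(w)`. The factor
`t ^ (-2α)` turns the left-hand operator into `∂²/∂t² + ((1 - 2α) / t) ∂/∂t`, which sends `P(w)` to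
`4 t² P''(w) + 4 (1 - α) P'(w)`. Since `∇q = 2 Q⁻¹y` and `∇²q = 2 Q⁻¹`, the right-hand operator
sends `P(w)` to `4 q(y) P''(w) - 2 d P'(w)`. The two sides agree exactly when `P` solves Euler's
equation `w P''(w) = (α - d/2 - 1) P'(w)`, as every multiple of `w ^ (α - d/2)` does.
-/

section PartialDerivatives

lemma hasDerivAt_mulVec_update_apply {𝕜 m n : Type*} [NontriviallyNormedField 𝕜] [Fintype n]
    [DecidableEq n] (A : Matrix m n 𝕜) (y : n → 𝕜) (i : n) (j : m) :
    HasDerivAt (fun s => (A *ᵥ Function.update y i s) j) (A j i) (y i) := by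
  have hsum := HasDerivAt.fun_sum fun k (_ : k ∈ Finset.univ) =>
    (hasDerivAt_pi.1 (hasDerivAt_update y i (y i)) k).const_mul (A j k)
  exact hsum.congr_deriv (by simp [Pi.single_apply])

lemma hasDerivAt_dotProduct_mulVec_update {𝕜 n : Type*} [NontriviallyNormedField 𝕜] [Fintype n]
    [DecidableEq n] (A : Matrix n n 𝕜) (y : n → 𝕜) (i : n) :
    HasDerivAt (fun s => Function.update y i s ⬝ᵥ A *ᵥ Function.update y i s)
      (((A + Aᵀ) *ᵥ y) i) (y i) := by
  have hprod := HasDerivAt.fun_sum fun k (_ : k ∈ Finset.univ) =>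
    (hasDerivAt_pi.1 (hasDerivAt_update y i (y i)) k).fun_mul
      (hasDerivAt_mulVec_update_apply A y i k)
  refine hprod.congr_deriv ?_
  simp [Finset.sum_add_distrib, Pi.single_apply, Matrix.add_mulVec,
    Matrix.mulVec_transpose, Matrix.vecMul, dotProduct]

variable {d : ℕ} {A : Matrix (Fin d) (Fin d) ℝ} {F F' : ℝ → ℝ} {F'' : ℝ} {y : Fin d → ℝ}

lemma pd_comp_quadraticForm {a : ℝ} (hF : HasDerivAt F a (y ⬝ᵥ A *ᵥ y)) (j : Fin d) :
    pd j (fun z => F (z ⬝ᵥ A *ᵥ z)) y = a * ((A + Aᵀ) *ᵥ y) j :=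
  (hF.comp_of_eq (y j) (hasDerivAt_dotProduct_mulVec_update A y j) (by simp)).deriv

lemma pd_pd_comp_quadraticForm (hF : ∀ᶠ q in 𝓝 (y ⬝ᵥ A *ᵥ y), HasDerivAt F (F' q) q)
    (hF' : HasDerivAt F' F'' (y ⬝ᵥ A *ᵥ y)) (i j : Fin d) :
    pd i (pd j fun z => F (z ⬝ᵥ A *ᵥ z)) y =
      F' (y ⬝ᵥ A *ᵥ y) * (A + Aᵀ) i j +
        F'' * (((A + Aᵀ) *ᵥ y) i * ((A + Aᵀ) *ᵥ y) j) := by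
  have hq := hasDerivAt_dotProduct_mulVec_update A y i
  have hpd : (fun s => pd j (fun z => F (z ⬝ᵥ A *ᵥ z)) (Function.update y i s)) =ᶠ[𝓝 (y i)]
      fun s => F' (Function.update y i s ⬝ᵥ A *ᵥ Function.update y i s) *
        ((A + Aᵀ) *ᵥ Function.update y i s) j := by
    have hnear := hq.continuousAt.tendsto
    simp only [Function.update_eq_self] at hnear
    filter_upwards [hnear.eventually hF] with s hs
    exact pd_comp_quadraticForm hs j
  have hderiv := (hF'.comp_of_eq (y i) hq (by simp)).fun_mul
    (hasDerivAt_mulVec_update_apply (A + Aᵀ) y i j)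
  refine hpd.deriv_eq.trans (hderiv.deriv.trans ?_)
  simp only [Function.comp_apply, Function.update_eq_self, Matrix.add_apply,
    Matrix.transpose_apply]
  ring

lemma sum_sum_mul_add_eq_trace_add_dotProduct {R n : Type*} [CommSemiring R] [Fintype n]
    (Q B : Matrix n n R) (v : n → R) (a b : R) :
    ∑ i, ∑ j, Q i j * (a * B i j + b * (v i * v j)) =
      a * (Q * Bᵀ).trace + b * (v ⬝ᵥ Q *ᵥ v) := by
  simp only [← Matrix.sum_hadamard_eq, Matrix.hadamard_apply, dotProduct, Matrix.mulVec,
    Finset.mul_sum, ← Finset.sum_add_distrib]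
  exact Finset.sum_congr rfl fun i _ => Finset.sum_congr rfl fun j _ => by ring

lemma sum_sum_mul_pd_pd_comp_inv_quadraticForm {Q : Matrix (Fin d) (Fin d) ℝ} (hQ : Q.IsSymm)
    (hdet : IsUnit Q.det) (hF : ∀ᶠ q in 𝓝 (y ⬝ᵥ Q⁻¹ *ᵥ y), HasDerivAt F (F' q) q)
    (hF' : HasDerivAt F' F'' (y ⬝ᵥ Q⁻¹ *ᵥ y)) :
    ∑ i, ∑ j, Q i j * pd i (pd j fun z => F (z ⬝ᵥ Q⁻¹ *ᵥ z)) y =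
      2 * d * F' (y ⬝ᵥ Q⁻¹ *ᵥ y) + 4 * (y ⬝ᵥ Q⁻¹ *ᵥ y) * F'' := by
  have hinv : Q⁻¹ + Q⁻¹ᵀ = (2 : ℝ) • Q⁻¹ := by
    rw [Matrix.transpose_nonsing_inv, hQ.eq, two_smul]
  have htrace : (Q * ((2 : ℝ) • Q⁻¹)ᵀ).trace = 2 * d := by
    rw [Matrix.transpose_smul, Matrix.transpose_nonsing_inv, hQ.eq, Matrix.mul_smul,
      Matrix.mul_nonsing_inv Q hdet, Matrix.trace_smul, Matrix.trace_one, Fintype.card_fin,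
      smul_eq_mul]
  have hgrad : (((2 : ℝ) • Q⁻¹) *ᵥ y) ⬝ᵥ Q *ᵥ (((2 : ℝ) • Q⁻¹) *ᵥ y) =
      4 * (y ⬝ᵥ Q⁻¹ *ᵥ y) := by
    rw [Matrix.mulVec_mulVec, Matrix.mul_smul, Matrix.mul_nonsing_inv Q hdet, Matrix.smul_mulVec,
      Matrix.smul_mulVec, Matrix.one_mulVec, smul_dotProduct, dotProduct_smul,
      dotProduct_comm, smul_eq_mul, smul_eq_mul]
    ring
  simp only [pd_pd_comp_quadraticForm hF hF', hinv]
  rw [sum_sum_mul_add_eq_trace_add_dotProduct, htrace, hgrad]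
  ring

end PartialDerivatives

section TimeDerivatives

lemma hasDerivAt_rpow_mul_comp_sq {G : ℝ → ℝ} {a t : ℝ} (p : ℝ) (ht : t ≠ 0)
    (hG : HasDerivAt G a (t ^ 2)) :
    HasDerivAt (fun r => r ^ p * G (r ^ 2))
      (p * (t ^ (p - 1) * G (t ^ 2)) + 2 * (t ^ (p + 1) * a)) t := by
  refine ((Real.hasDerivAt_rpow_const (Or.inl ht)).fun_mul
    (hG.comp_of_eq t (hasDerivAt_pow 2 t) rfl)).congr_deriv ?_
  rw [Real.rpow_add_one ht]
  simp only [Function.comp_apply]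
  push_cast
  ring

lemma deriv_deriv_add_div_mul_deriv_rpow_mul_comp_sq {G G' : ℝ → ℝ} {G'' t : ℝ} (α : ℝ)
    (ht : t ≠ 0) (hG : ∀ᶠ s in 𝓝 (t ^ 2), HasDerivAt G (G' s) s)
    (hG' : HasDerivAt G' G'' (t ^ 2)) :
    deriv (fun s => deriv (fun r => r ^ (-(2 * α)) * G (r ^ 2)) s) t +
        ((2 * α + 1) / t) * deriv (fun r => r ^ (-(2 * α)) * G (r ^ 2)) t =
      t ^ (-(2 * α)) * (4 * t ^ 2 * G'' + 4 * (1 - α) * G' (t ^ 2)) := by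
  set p := -(2 * α) with hp
  have hfirst : (fun s => deriv (fun r => r ^ p * G (r ^ 2)) s) =ᶠ[𝓝 t]
      fun s => p * (s ^ (p - 1) * G (s ^ 2)) + 2 * (s ^ (p + 1) * G' (s ^ 2)) := by
    filter_upwards [eventually_ne_nhds ht, (continuousAt_pow t 2).eventually hG] with s hs hGs
    exact (hasDerivAt_rpow_mul_comp_sq p hs hGs).deriv
  have hsecond :=
    ((hasDerivAt_rpow_mul_comp_sq (p - 1) ht hG.self_of_nhds).const_mul p).fun_add
      ((hasDerivAt_rpow_mul_comp_sq (p + 1) ht hG').const_mul 2)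
  rw [hfirst.deriv_eq, hsecond.deriv, hfirst.eq_of_nhds, add_sub_cancel_right, sub_add_cancel]
  simp only [Real.rpow_add_one ht, Real.rpow_sub_one ht]
  rw [show α = -p / 2 by rw [hp]; ring]
  field_simp
  ring

end TimeDerivatives

section Profiles

variable {d : ℕ} {Q : Matrix (Fin d) (Fin d) ℝ} {t : ℝ} {y : Fin d → ℝ}

lemma epd_of_profile_ode (hQ : Q.IsSymm) (hdet : IsUnit Q.det) {P P' : ℝ → ℝ} {P'' α : ℝ}
    (ht : t ≠ 0) (hP : ∀ᶠ w in 𝓝 (t ^ 2 - y ⬝ᵥ Q⁻¹ *ᵥ y), HasDerivAt P (P' w) w)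
    (hP' : HasDerivAt P' P'' (t ^ 2 - y ⬝ᵥ Q⁻¹ *ᵥ y))
    (hode : (t ^ 2 - y ⬝ᵥ Q⁻¹ *ᵥ y) * P'' =
      (α - (d : ℝ) / 2 - 1) * P' (t ^ 2 - y ⬝ᵥ Q⁻¹ *ᵥ y)) :
    deriv (fun s => deriv (fun r => r ^ (-(2 * α)) * P (r ^ 2 - y ⬝ᵥ Q⁻¹ *ᵥ y)) s) t +
        ((2 * α + 1) / t) * deriv (fun r => r ^ (-(2 * α)) * P (r ^ 2 - y ⬝ᵥ Q⁻¹ *ᵥ y)) t =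
      ∑ i, ∑ j, Q i j *
        pd i (pd j fun z => t ^ (-(2 * α)) * P (t ^ 2 - z ⬝ᵥ Q⁻¹ *ᵥ z)) y := by
  have htime := deriv_deriv_add_div_mul_deriv_rpow_mul_comp_sq α ht
    (G := fun s => P (s - y ⬝ᵥ Q⁻¹ *ᵥ y)) (G' := fun s => P' (s - y ⬝ᵥ Q⁻¹ *ᵥ y))
    (((continuousAt_id.sub continuousAt_const).eventually hP).mono
      fun s hs => hs.comp_sub_const s _)
    (hP'.comp_sub_const (t ^ 2) _)
  have hspace := sum_sum_mul_pd_pd_comp_inv_quadraticForm hQ hdet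
    (F := fun q => t ^ (-(2 * α)) * P (t ^ 2 - q)) (F' := fun q => t ^ (-(2 * α)) * -P' (t ^ 2 - q))
    (((continuousAt_const.sub continuousAt_id).eventually hP).mono
      fun q hq => (hq.comp_const_sub (t ^ 2) q).const_mul _)
    ((hP'.comp_const_sub (t ^ 2) _).fun_neg.const_mul _)
  rw [htime, hspace]
  linear_combination 4 * t ^ (-(2 * α)) * hode

theorem epd_fundamental_solution_satisfies_epd_general (hQ : Q.IsSymm) (hdet : IsUnit Q.det)
    (C α : ℝ) (ht : 0 < t) (hy : y ⬝ᵥ (Q⁻¹ *ᵥ y) < t ^ 2) :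
    let u : ℝ → (Fin d → ℝ) → ℝ := fun r z =>
      C * r ^ (-(2 * α)) * (r ^ 2 - z ⬝ᵥ (Q⁻¹ *ᵥ z)) ^ (α - (d : ℝ) / 2)
    deriv (fun s => deriv (fun r => u r y) s) t + ((2 * α + 1) / t) * deriv (fun s => u s y) t =
      ∑ i, ∑ j, Q i j * pd i (pd j (u t)) y := by
  intro u
  have hw : 0 < t ^ 2 - y ⬝ᵥ (Q⁻¹ *ᵥ y) := sub_pos.2 hy
  have hpow {x : ℝ} (p : ℝ) (hx : 0 < x) : HasDerivAt (fun s => s ^ p) (p * x ^ (p - 1)) x :=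
    Real.hasDerivAt_rpow_const (Or.inl hx.ne')
  have hu : u = fun r z => r ^ (-(2 * α)) *
      (C * (r ^ 2 - z ⬝ᵥ (Q⁻¹ *ᵥ z)) ^ (α - (d : ℝ) / 2)) := by
    funext r z; ring
  rw [hu]
  refine epd_of_profile_ode hQ hdet (P := fun w => C * w ^ (α - (d : ℝ) / 2)) ht.ne'
    ((eventually_gt_nhds hw).mono fun x hx => (hpow _ hx).const_mul C)
    (((hpow _ hw).const_mul _).const_mul C) ?_
  rw [Real.rpow_sub_one hw.ne' (α - d / 2 - 1)]
  field_simp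

end Profiles

/-- The fundamental solution satisfies the Euler–Poisson–Darboux equation pointwise on the
open region D = {(t,y) : 0 < t, ⟨y,Q⁻¹y⟩ < t²}. -/
theorem epd_fundamental_solution_satisfies_epd
    (d : ℕ) (hd : 1 ≤ d) (Q : Matrix (Fin d) (Fin d) ℝ) (hQ : Q.PosDef)
    (α : ℝ) (hα : (d : ℝ) / 2 - 1 < α) :
    ∀ t : ℝ, ∀ y : Fin d → ℝ, 0 < t → y ⬝ᵥ (Q⁻¹ *ᵥ y) < t ^ 2 →
      deriv (fun s => deriv (fun r => epdSol d Q α r y) s) t +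
          ((2 * α + 1) / t) * deriv (fun s => epdSol d Q α s y) t =
        ∑ i, ∑ j, Q i j * pd i (pd j (epdSol d Q α t)) y := by
  intro t y ht hy
  exact epd_fundamental_solution_satisfies_epd_general
    (Matrix.isHermitian_iff_isSymm.1 hQ.isHermitian) hQ.det_pos.ne'.isUnit _ α ht hy
end
end

section
/- Mehler–Heine asymptotics: for every compact set K ⊂ (0,∞), sup_{z∈K} | π_n^{(d/2,0)}(1 − z²/(2n²)) − 2^{d/2} Γ(d/2+1) z^{−d/2} J_{d/2}(z) | → 0 as n → ∞, where J_{d/2} is the Bessel function of the first kind of order d/2. -/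
open MeasureTheory Matrix Filter Topology Real

noncomputable section

/-!
Put `x = -z²/4`. The definition expands `π_n^{(α,β)}(1 + 2 x / n²)` in the products
`(x / n²)^s (1 + x / n²)^(n - s)`, and its `s`-th term is the `s`-th term `c_s x^s` of
`₀F₁(α + 1; x) = 2^α Γ(α + 1) z^{-α} J_α(z)` times a factor which tends to `1`, uniformly for `x` in
a bounded set, and which is at most `C (1 + |β|)^s` uniformly in `n`. Since `₀F₁` converges
everywhere, dominated convergence for series, applied along the filter that describes uniform
convergence, yields the limit.
-/

section UniformConvergence

variable {ι κ X E : Type*} [NormedAddCommGroup E] {l : Filter ι} {S : Set X}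

lemma tendstoUniformlyOn_iff_tendsto_sub {F : ι → X → E} {f : X → E} :
    TendstoUniformlyOn F f l S ↔
      Tendsto (fun p : ι × X => F p.1 p.2 - f p.2) (l ×ˢ 𝓟 S) (𝓝 0) := by
  have h := tendsto_prod_principal_iff (F := fun i x => F i x - f x) (p := l) (s := S) (c := 0)
  refine Iff.trans ?_ h.symm
  simp only [Metric.tendstoUniformlyOn_iff, dist_eq_norm, zero_sub, norm_neg, norm_sub_rev]

lemma tendstoUniformlyOn_tsum_of_dominated [CompleteSpace E] {f : ι → κ → X → E}
    {g : κ → X → E} {bound : κ → ℝ} (hbound : Summable bound)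
    (hfg : ∀ k, TendstoUniformlyOn (fun i => f i k) (g k) l S)
    (hf : ∀ᶠ i in l, ∀ k, ∀ x ∈ S, ‖f i k x‖ ≤ bound k) :
    TendstoUniformlyOn (fun i x => ∑' k, f i k x) (fun x => ∑' k, g k x) l S := by
  rcases l.eq_or_neBot with rfl | _
  · exact fun _ _ => eventually_bot
  have hg (k : κ) {x : X} (hx : x ∈ S) : ‖g k x‖ ≤ bound k :=
    le_of_tendsto ((hfg k).tendsto_at hx).norm (hf.mono fun _ hi => hi k x hx)
  have hboth : ∀ᶠ p in l ×ˢ 𝓟 S, ∀ k, ‖f p.1 k p.2‖ ≤ bound k ∧ ‖g k p.2‖ ≤ bound k := by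
    filter_upwards [hf.prod_mk (eventually_mem_principal S)] with p ⟨hp, hpS⟩ k
    exact ⟨hp k p.2 hpS, hg k hpS⟩
  have hdiff : Tendsto (fun p : ι × X => ∑' k, (f p.1 k p.2 - g k p.2)) (l ×ˢ 𝓟 S)
      (𝓝 (∑' _ : κ, 0)) := by
    refine tendsto_tsum_of_dominated_convergence (hbound.add hbound)
      (fun k => tendstoUniformlyOn_iff_tendsto_sub.1 (hfg k)) ?_
    filter_upwards [hboth] with p hp k
    exact (norm_sub_le _ _).trans (add_le_add (hp k).1 (hp k).2)
  rw [tsum_zero] at hdiff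
  refine tendstoUniformlyOn_iff_tendsto_sub.2 (hdiff.congr' ?_)
  filter_upwards [hboth] with p hp
  exact (hbound.of_norm_bounded fun k => (hp k).1).tsum_sub
    (hbound.of_norm_bounded fun k => (hp k).2)

lemma tendsto_iSup_norm_sub_of_tendstoUniformlyOn {F : ι → X → E} {f : X → E}
    (h : TendstoUniformlyOn F f l S) :
    Tendsto (fun i => ⨆ x : S, ‖F i x - f x‖) l (𝓝 0) := by
  refine Metric.tendsto_nhds.2 fun ε hε => ?_
  filter_upwards [Metric.tendstoUniformlyOn_iff.1 h (ε / 2) (half_pos hε)] with i hi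
  have hle : ⨆ x : S, ‖F i x - f x‖ ≤ ε / 2 := Real.iSup_le
    (fun x => by simpa only [dist_eq_norm, norm_sub_rev] using (hi x x.2).le) (half_pos hε).le
  rw [Real.dist_0_eq_abs, abs_of_nonneg (Real.iSup_nonneg fun x => norm_nonneg _)]
  exact hle.trans_lt (half_lt_self hε)

end UniformConvergence

section Gamma

-- At a pole `Real.Gamma` is `0`, so its inverse agrees everywhere with the entire function `1 / Γ`.
lemma inv_Gamma_eq_mul_inv_Gamma_add_one (x : ℝ) :
    (Real.Gamma x)⁻¹ = x * (Real.Gamma (x + 1))⁻¹ := by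
  rcases eq_or_ne x 0 with rfl | hx
  · simp only [Real.Gamma_zero, _root_.inv_zero, zero_mul]
  · rw [Real.Gamma_add_one hx, mul_inv, mul_inv_cancel_left₀ hx]

lemma Gamma_add_one_div_Gamma_sub_natCast_add_one {x : ℝ} (hx : Real.Gamma (x + 1) ≠ 0) (s : ℕ) :
    Real.Gamma (x + 1) / Real.Gamma (x - s + 1) = ∏ i ∈ Finset.range s, (x - i) := by
  induction s with
  | zero => simp [hx]
  | succ s ih =>
    have hshift : x - ((s + 1 : ℕ) : ℝ) + 1 = x - s := by push_cast; ring
    rw [Finset.prod_range_succ, ← ih, hshift, div_eq_mul_inv,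
      inv_Gamma_eq_mul_inv_Gamma_add_one (x - s)]
    ring

lemma Gamma_add_natCast_ne_zero {x : ℝ} (hx : ∀ m : ℕ, x ≠ -m) (n : ℕ) :
    Real.Gamma (x + n) ≠ 0 := by
  refine Real.Gamma_ne_zero fun m hm => hx (m + n) ?_
  push_cast
  linarith

end Gamma

section BesselSeries

/-- The `s`-th Taylor coefficient of `₀F₁(ν + 1; x)`, the entire function whose value at
`x = -z²/4` is the quotient of the Bessel function `J_ν(z)` by its leading term. -/
def besselCoeff (ν : ℝ) (s : ℕ) : ℝ := Real.Gamma (ν + 1) / (Real.Gamma (ν + s + 1) * s.factorial)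

lemma besselCoeff_eq_mul_besselCoeff_succ (ν : ℝ) (s : ℕ) :
    besselCoeff ν s = (ν + s + 1) * (s + 1) * besselCoeff ν (s + 1) := by
  have hs : (s : ℝ) + 1 ≠ 0 := s.cast_add_one_ne_zero
  have hshift : ν + ((s + 1 : ℕ) : ℝ) + 1 = ν + s + 1 + 1 := by push_cast; ring
  rw [besselCoeff, besselCoeff, hshift, Nat.factorial_succ, div_eq_mul_inv, mul_inv,
    inv_Gamma_eq_mul_inv_Gamma_add_one]
  push_cast
  field_simp

lemma summable_besselCoeff_mul_pow (ν x : ℝ) : Summable fun s => besselCoeff ν s * x ^ s := by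
  have hgrowth : Tendsto (fun s : ℕ => (ν + s + 1) * ((s : ℝ) + 1)) atTop atTop :=
    (tendsto_atTop_add_const_right _ 1
      (tendsto_atTop_add_const_left _ ν tendsto_natCast_atTop_atTop)).atTop_mul_atTop₀
      (tendsto_atTop_add_const_right _ 1 tendsto_natCast_atTop_atTop)
  refine summable_of_ratio_norm_eventually_le one_half_lt_one ?_
  filter_upwards [hgrowth.eventually_ge_atTop (2 * |x|)] with s hs
  have hterm : 0 ≤ |besselCoeff ν (s + 1)| * |x| ^ s := by positivity
  rw [besselCoeff_eq_mul_besselCoeff_succ ν s]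
  simp only [Real.norm_eq_abs, abs_mul, abs_pow, pow_succ]
  rw [← abs_mul]
  nlinarith [hs.trans (le_abs_self _)]

lemma rpow_mul_besselJ_eq_tsum (ν : ℝ) {z : ℝ} (hz : 0 < z) :
    2 ^ ν * Real.Gamma (ν + 1) * z ^ (-ν) * besselJ ν z =
      ∑' s, besselCoeff ν s * (-(z ^ 2 / 4)) ^ s := by
  rw [besselJ, ← tsum_mul_left]
  refine tsum_congr fun s => ?_
  have hpow : (z / 2) ^ (2 * (s : ℝ) + ν) = (z ^ 2 / 4) ^ s * (z ^ ν / 2 ^ ν) := by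
    rw [Real.rpow_add (by positivity), Real.div_rpow hz.le zero_le_two ν,
      Real.rpow_mul (by positivity), Real.rpow_natCast, Real.rpow_two, div_pow]
    norm_num
  have hzν : z ^ ν ≠ 0 := (Real.rpow_pos_of_pos hz ν).ne'
  have h2ν : (2 : ℝ) ^ ν ≠ 0 := (Real.rpow_pos_of_pos two_pos ν).ne'
  rw [hpow, Real.rpow_neg hz.le, neg_pow (z ^ 2 / 4), besselCoeff, add_comm (s : ℝ) ν]
  field_simp

end BesselSeries

section FallingRatio

/-- The falling factorial `(n + β) (n + β - 1) ⋯ (n + β - s + 1)` divided by `n ^ s`. The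
cases `0` and `β` occur in the `s`-th coefficient of `P_n^{(α,β)}`. Writing it as a product of
factors near `1` makes the limit `n → ∞` visible. -/
def fallingRatio (β : ℝ) (n s : ℕ) : ℝ := ∏ i ∈ Finset.range s, (1 + (β - i) / n)

lemma prod_range_add_sub_eq_pow_mul_fallingRatio (β : ℝ) {n : ℕ} (hn : n ≠ 0) (s : ℕ) :
    ∏ i ∈ Finset.range s, ((n : ℝ) + β - i) = n ^ s * fallingRatio β n s := by
  have hn' : (n : ℝ) ≠ 0 := Nat.cast_ne_zero.2 hn
  rw [fallingRatio, Finset.pow_eq_prod_const, ← Finset.prod_mul_distrib]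
  refine Finset.prod_congr rfl fun i _ => ?_
  field_simp
  ring

lemma fallingRatio_zero_eq_zero {n s : ℕ} (hn : n ≠ 0) (hs : n < s) : fallingRatio 0 n s = 0 := by
  refine Finset.prod_eq_zero (Finset.mem_range.2 hs) ?_
  rw [zero_sub, neg_div, div_self (Nat.cast_ne_zero.2 hn), add_neg_cancel]

lemma abs_fallingRatio_le (β : ℝ) {n s : ℕ} (hs : s ≤ n) :
    |fallingRatio β n s| ≤ (1 + |β|) ^ s := by
  have hfactor : ∀ i ∈ Finset.range s, |1 + (β - i) / (n : ℝ)| ≤ 1 + |β| := by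
    intro i hi
    have hin : i < n := (Finset.mem_range.1 hi).trans_le hs
    have hn : (1 : ℝ) ≤ n := Nat.one_le_cast.2 (by omega)
    have hi_div : (i : ℝ) / n ≤ 1 := div_le_one_of_le₀ (Nat.cast_le.2 hin.le) n.cast_nonneg
    calc |1 + (β - i) / (n : ℝ)| = |(1 - (i : ℝ) / n) + β / n| := by rw [sub_div]; ring_nf
      _ ≤ |1 - (i : ℝ) / n| + |β / n| := abs_add_le _ _
      _ = (1 - (i : ℝ) / n) + |β| / n := by
        rw [abs_of_nonneg (sub_nonneg.2 hi_div), abs_div, Nat.abs_cast]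
      _ ≤ 1 + |β| := add_le_add (sub_le_self 1 (by positivity)) (div_le_self (abs_nonneg β) hn)
  rw [fallingRatio, Finset.abs_prod, Finset.pow_eq_prod_const]
  exact Finset.prod_le_prod (fun i _ => abs_nonneg _) hfactor

lemma tendsto_fallingRatio (β : ℝ) (s : ℕ) :
    Tendsto (fun n => fallingRatio β n s) atTop (𝓝 1) := by
  have hfactor (i : ℕ) : Tendsto (fun n : ℕ => 1 + (β - i) / (n : ℝ)) atTop (𝓝 1) := by
    simpa only [add_zero] using (tendsto_const_div_atTop_nhds_zero_nat (β - i)).const_add 1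
  simpa only [fallingRatio, Finset.prod_const_one] using tendsto_finsetProd _ fun i _ => hfactor i

end FallingRatio

section Jacobi

lemma jacobiP_apply_one (α : ℝ) {β : ℝ} {n : ℕ} (hβ : Real.Gamma (n + β + 1) ≠ 0) :
    jacobiP α β n 1 = Real.Gamma (n + α + 1) / (Real.Gamma (α + 1) * n.factorial) := by
  rw [jacobiP, Finset.sum_eq_single 0]
  · simp [hβ]
  · intro s _ hs
    simp [hs]
  · simp

lemma jacobiPi_one_add_two_mul {α β : ℝ} {n : ℕ} (hα : ∀ m : ℕ, α + 1 ≠ -m)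
    (hβ : Real.Gamma (n + β + 1) ≠ 0) (y : ℝ) :
    jacobiPi α β n (1 + 2 * y) = ∑ s ∈ Finset.range (n + 1), besselCoeff α s *
      (∏ i ∈ Finset.range s, ((n : ℝ) - i)) * (∏ i ∈ Finset.range s, ((n : ℝ) + β - i)) *
      (y ^ s * (1 + y) ^ (n - s)) := by
  have hΓα : Real.Gamma (n + α + 1) ≠ 0 := by
    convert Gamma_add_natCast_ne_zero hα n using 2
    ring
  rw [jacobiPi, jacobiP_apply_one α hβ, jacobiP, Finset.sum_div]
  refine Finset.sum_congr rfl fun s hs => ?_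
  have hsn : s ≤ n := Finset.mem_range_succ_iff.1 hs
  have hfact : ∏ i ∈ Finset.range s, ((n : ℝ) - i) = n.factorial / (n - s).factorial := by
    have hΓ := Gamma_add_one_div_Gamma_sub_natCast_add_one
      (Real.Gamma_pos_of_pos (n.cast_add_one_pos (α := ℝ))).ne' s
    rw [← hΓ, ← Nat.cast_sub hsn, Real.Gamma_nat_eq_factorial, Real.Gamma_nat_eq_factorial]
  have hleft : (1 + 2 * y - 1) / 2 = y := by ring
  have hright : (1 + 2 * y + 1) / 2 = 1 + y := by ring
  rw [hleft, hright, hfact, ← Gamma_add_one_div_Gamma_sub_natCast_add_one hβ, besselCoeff]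
  field_simp

/-- The ratio of the `s`-th term in the expansion of `π_n^{(α,β)}(1 + 2 x / n²)` in the products
`(x / n²)^s (1 + x / n²)^(n - s)` to the `s`-th term of `₀F₁(α + 1; x)`. It vanishes for
`0 ≠ n < s`, so that the finite expansion can be summed over all `s`. -/
def jacobiMultiplier (β : ℝ) (n s : ℕ) (x : ℝ) : ℝ :=
  fallingRatio 0 n s * fallingRatio β n s * (1 + x / n ^ 2) ^ (n - s)

lemma jacobiMultiplier_eq_zero (β : ℝ) {n s : ℕ} (hn : n ≠ 0) (hs : n < s) (x : ℝ) :
    jacobiMultiplier β n s x = 0 := by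
  rw [jacobiMultiplier, fallingRatio_zero_eq_zero hn hs, zero_mul, zero_mul]

lemma jacobiPi_one_add_two_mul_div_sq {α β : ℝ} {n : ℕ} (hα : ∀ m : ℕ, α + 1 ≠ -m)
    (hβ : Real.Gamma (n + β + 1) ≠ 0) (hn : n ≠ 0) (x : ℝ) :
    jacobiPi α β n (1 + 2 * (x / n ^ 2)) =
      ∑' s, besselCoeff α s * x ^ s * jacobiMultiplier β n s x := by
  rw [jacobiPi_one_add_two_mul hα hβ, tsum_eq_sum (s := Finset.range (n + 1))]
  · refine Finset.sum_congr rfl fun s _ => ?_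
    have hn' : (n : ℝ) ≠ 0 := Nat.cast_ne_zero.2 hn
    have hfalling := prod_range_add_sub_eq_pow_mul_fallingRatio 0 hn s
    simp only [add_zero] at hfalling
    rw [jacobiMultiplier, hfalling, prod_range_add_sub_eq_pow_mul_fallingRatio β hn, div_pow, sq,
      mul_pow]
    field_simp
  · intro s hs
    have hns : n < s := by simpa only [Finset.mem_range, not_lt, Nat.succ_le_iff] using hs
    rw [jacobiMultiplier_eq_zero β hn hns, mul_zero]

end Jacobi

section Convergence

lemma abs_one_add_div_sq_pow_sub_one_le (x : ℝ) {k n : ℕ} (hk : k ≤ n) :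
    |(1 + x / n ^ 2) ^ k - 1| ≤ Real.exp (|x| / n) - 1 := by
  have hprod := (Finset.range k).norm_prod_one_add_sub_one_le fun _ => x / (n : ℝ) ^ 2
  simp only [Finset.prod_const, Finset.sum_const, Finset.card_range, nsmul_eq_mul, norm_div,
    norm_pow, Real.norm_eq_abs, Nat.abs_cast] at hprod
  refine hprod.trans (sub_le_sub_right (Real.exp_le_exp.2 ?_) 1)
  calc (k : ℝ) * (|x| / n ^ 2) ≤ n * (|x| / n ^ 2) := by gcongr
    _ = |x| / n := by
      rcases eq_or_ne (n : ℝ) 0 with hn | hn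
      · simp [hn]
      · field_simp

lemma tendstoUniformlyOn_one_add_div_sq_pow (s : ℕ) {S : Set ℝ} (hS : Bornology.IsBounded S) :
    TendstoUniformlyOn (fun (n : ℕ) x => (1 + x / (n : ℝ) ^ 2) ^ (n - s)) (fun _ => 1) atTop S := by
  obtain ⟨M, hM⟩ := hS.exists_norm_le
  have hexp : Tendsto (fun n : ℕ => Real.exp (M / n) - 1) atTop (𝓝 0) := by
    simpa using ((tendsto_const_div_atTop_nhds_zero_nat M).rexp).sub_const 1
  refine Metric.tendstoUniformlyOn_iff.2 fun ε hε => ?_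
  filter_upwards [hexp.eventually_lt_const hε] with n hn x hx
  rw [dist_comm, Real.dist_eq]
  calc _ ≤ Real.exp (|x| / n) - 1 := abs_one_add_div_sq_pow_sub_one_le x (n.sub_le s)
    _ ≤ Real.exp (M / n) - 1 := by gcongr; exact hM x hx
    _ < ε := hn

lemma abs_jacobiMultiplier_le (β : ℝ) {x M : ℝ} (hx : |x| ≤ M) {n : ℕ} (hn : n ≠ 0) (s : ℕ) :
    |jacobiMultiplier β n s x| ≤ (1 + |β|) ^ s * Real.exp M := by
  rcases lt_or_ge n s with hs | hs
  · rw [jacobiMultiplier_eq_zero β hn hs, abs_zero]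
    positivity
  have hzero : |fallingRatio 0 n s| ≤ 1 := by simpa using abs_fallingRatio_le 0 hs
  have hpow : |(1 + x / (n : ℝ) ^ 2) ^ (n - s)| ≤ Real.exp M := by
    have hxn : |x| / n ≤ M :=
      (div_le_self (abs_nonneg x) (Nat.one_le_cast.2 (Nat.one_le_iff_ne_zero.2 hn))).trans hx
    have hsub := abs_one_add_div_sq_pow_sub_one_le x (n.sub_le s)
    have htri := abs_sub_abs_le_abs_sub ((1 + x / (n : ℝ) ^ 2) ^ (n - s)) 1
    rw [abs_one] at htri
    linarith [Real.exp_le_exp.2 hxn]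
  rw [jacobiMultiplier, abs_mul, abs_mul]
  calc _ ≤ 1 * (1 + |β|) ^ s * Real.exp M := by gcongr; exact abs_fallingRatio_le β hs
    _ = _ := by rw [one_mul]

lemma tendstoUniformlyOn_jacobiMultiplier (β : ℝ) (s : ℕ) {S : Set ℝ}
    (hS : Bornology.IsBounded S) :
    TendstoUniformlyOn (fun n => jacobiMultiplier β n s) (fun _ => 1) atTop S := by
  have hratio (γ : ℝ) : Tendsto (fun p : ℕ × ℝ => fallingRatio γ p.1 s) (atTop ×ˢ 𝓟 S) (𝓝 1) :=
    (tendsto_fallingRatio γ s).comp tendsto_fst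
  have hpow := tendsto_prod_principal_iff.2 (tendstoUniformlyOn_one_add_div_sq_pow s hS)
  have hmul := ((hratio 0).mul (hratio β)).mul hpow
  rw [mul_one, mul_one] at hmul
  exact tendsto_prod_principal_iff.1 hmul

lemma tendstoUniformlyOn_jacobi_term (α β : ℝ) (s : ℕ) {S : Set ℝ} (hS : Bornology.IsBounded S) :
    TendstoUniformlyOn (fun n x => besselCoeff α s * x ^ s * jacobiMultiplier β n s x)
      (fun x => besselCoeff α s * x ^ s) atTop S := by
  obtain ⟨M, hM⟩ := hS.exists_norm_le
  have hbdd : IsBoundedUnder (· ≤ ·) (atTop ×ˢ 𝓟 S)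
      (norm ∘ fun p : ℕ × ℝ => besselCoeff α s * p.2 ^ s) := by
    refine ⟨|besselCoeff α s| * M ^ s, eventually_map.2 ?_⟩
    filter_upwards [(eventually_mem_principal S).prod_inr atTop] with p hp
    rw [Function.comp_apply, norm_mul, norm_pow, Real.norm_eq_abs]
    gcongr
    exact hM p.2 hp
  refine tendstoUniformlyOn_iff_tendsto_sub.2 ?_
  simpa only [mul_sub, mul_one] using isBoundedUnder_le_mul_tendsto_zero hbdd
    (tendstoUniformlyOn_iff_tendsto_sub.1 (tendstoUniformlyOn_jacobiMultiplier β s hS))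

theorem tendstoUniformlyOn_jacobiPi {α : ℝ} (hα : ∀ m : ℕ, α + 1 ≠ -m) (β : ℝ) {S : Set ℝ}
    (hS : Bornology.IsBounded S) :
    TendstoUniformlyOn (fun (n : ℕ) x => jacobiPi α β n (1 + 2 * (x / (n : ℝ) ^ 2)))
      (fun x => ∑' s, besselCoeff α s * x ^ s) atTop S := by
  obtain ⟨M, hM⟩ := hS.exists_norm_le
  have hdominated : ∀ᶠ n in atTop, ∀ s, ∀ x ∈ S,
      ‖besselCoeff α s * x ^ s * jacobiMultiplier β n s x‖ ≤
        ‖besselCoeff α s * (M * (1 + |β|)) ^ s‖ * Real.exp M := by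
    filter_upwards [eventually_ne_atTop 0] with n hn s x hx
    have hM_nonneg : 0 ≤ M := (norm_nonneg x).trans (hM x hx)
    calc _ = ‖besselCoeff α s‖ * ‖x‖ ^ s * ‖jacobiMultiplier β n s x‖ := by
          rw [norm_mul, norm_mul, norm_pow]
      _ ≤ ‖besselCoeff α s‖ * M ^ s * ((1 + |β|) ^ s * Real.exp M) := by
          gcongr
          · exact hM x hx
          · exact abs_jacobiMultiplier_le β (hM x hx) hn s
      _ = _ := by
          rw [norm_mul, norm_pow, Real.norm_of_nonneg (by positivity : 0 ≤ M * (1 + |β|)), mul_pow]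
          ring
  have hseries := tendstoUniformlyOn_tsum_of_dominated
    ((summable_besselCoeff_mul_pow α (M * (1 + |β|))).norm.mul_right (Real.exp M))
    (fun s => tendstoUniformlyOn_jacobi_term α β s hS) hdominated
  refine hseries.congr ?_
  filter_upwards [eventually_ne_atTop 0,
    tendsto_natCast_atTop_atTop.eventually_gt_atTop (-β)] with n hn hnβ x _
  exact (jacobiPi_one_add_two_mul_div_sq hα
    (Real.Gamma_pos_of_pos (by linarith)).ne' hn x).symm

end Convergence

theorem mehler_heine_asymptotics_general {α : ℝ} (hα : ∀ m : ℕ, α + 1 ≠ -m) (β : ℝ) {K : Set ℝ}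
    (hK : Bornology.IsBounded K) (hK_pos : K ⊆ Set.Ioi 0) :
    Tendsto (fun n : ℕ => ⨆ z : K,
        |jacobiPi α β n (1 - (z : ℝ) ^ 2 / (2 * (n : ℝ) ^ 2)) -
          (2 : ℝ) ^ α * Real.Gamma (α + 1) * (z : ℝ) ^ (-α) * besselJ α (z : ℝ)|)
      atTop (𝓝 0) := by
  have hcont : Continuous fun z : ℝ => -(z ^ 2 / 4) := by fun_prop
  have hbdd : Bornology.IsBounded ((fun z : ℝ => -(z ^ 2 / 4)) '' K) :=
    (hK.isCompact_closure.image hcont).isBounded.subset (Set.image_mono subset_closure)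
  have hunif := ((tendstoUniformlyOn_jacobiPi hα β hbdd).comp fun z : ℝ => -(z ^ 2 / 4)).mono
    (Set.subset_preimage_image _ K)
  refine (tendsto_iSup_norm_sub_of_tendstoUniformlyOn hunif).congr fun n => iSup_congr fun z => ?_
  have harg : 1 + 2 * (-((z : ℝ) ^ 2 / 4) / (n : ℝ) ^ 2) = 1 - (z : ℝ) ^ 2 / (2 * (n : ℝ) ^ 2) := by
    ring
  rw [rpow_mul_besselJ_eq_tsum α (hK_pos z.2), Function.comp_apply, Function.comp_apply, harg,
    Real.norm_eq_abs]

/-- Mehler–Heine asymptotics for the normalized Jacobi polynomials, uniformly on compact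
subsets of (0,∞). -/
theorem mehler_heine_asymptotics
    (d : ℕ) (hd : 1 ≤ d) :
    ∀ K : Set ℝ, IsCompact K → K ⊆ Set.Ioi 0 →
      Tendsto (fun n : ℕ => ⨆ z : K,
          |jacobiPi ((d : ℝ) / 2) 0 n (1 - (z : ℝ) ^ 2 / (2 * (n : ℝ) ^ 2)) -
            (2 : ℝ) ^ ((d : ℝ) / 2) * Real.Gamma ((d : ℝ) / 2 + 1) *
              (z : ℝ) ^ (-(d : ℝ) / 2) * besselJ ((d : ℝ) / 2) (z : ℝ)|)
        atTop (𝓝 0) := by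
  intro K hK hK_pos
  have hα (m : ℕ) : (d : ℝ) / 2 + 1 ≠ -m :=
    ((neg_nonpos.2 m.cast_nonneg).trans_lt (by positivity)).ne'
  simpa only [neg_div] using mehler_heine_asymptotics_general hα 0 hK.isBounded hK_pos
end
end

section
/- There exist constants C₁, C₂ > 0 such that for every n ≥ 1 and every λ ∈ [−1,1]: if |λ| ≤ 1 − 1/n², then |π_n^{(d/2,0)}(λ)| ≤ C₁ (arccos|λ|)^{−d/2−1/2} n^{−d/2−1/2}, and otherwise |π_n^{(d/2,0)}(λ)| ≤ C₂. (Uniform bounds on normalized Jacobi polynomials over the support of the orthogonality measure.) -/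
open MeasureTheory Matrix Filter Topology Real

noncomputable section

/-!
Put `x = cos (2ψ)` and `u(ψ) = (sin ψ)^(α + 1/2) (cos ψ)^(β + 1/2) P_n(x)`. The Jacobi equation
becomes `u'' + φ u = 0`, where `φ` is nondecreasing on `(0, π/2)` if `α ≥ 1/2` and `|β| ≤ 1/2`.
Wherever `φ > 0`, Sonin's amplitude `u² + u'² / φ` is therefore nonincreasing, so `u` is bounded by
the amplitude at the angle `ψ₀` with `sin ψ₀ = α / n`, on the edge of the oscillatory region. There
everything is estimated by `μ P_n² + (1 - x²) P_n'² ≤ μ P_n(1)²`, `μ = n (n + α + β + 1)`: on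
`[-1, 1]` the left side is largest at an endpoint, and `|P_n(-1)| ≤ P_n(1)`. This also gives
`|P_n| ≤ P_n(1)`, which suffices when `n arccos |x| ≤ π α`.
-/

lemma Gamma_natCast_add_div_Gamma_le {x y : ℝ} (hx : 0 < x) (hxy : x ≤ y) (n : ℕ) :
    Gamma (n + x) / Gamma x ≤ Gamma (n + y) / Gamma y := by
  have hy : 0 < y := hx.trans_le hxy
  have ratio_succ {z : ℝ} (hz : 0 < z) (k : ℕ) :
      Gamma ((k + 1 : ℕ) + z) / Gamma z = (k + z) * (Gamma (k + z) / Gamma z) := by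
    rw [← mul_div_assoc, ← Gamma_add_one (by positivity)]
    push_cast
    ring_nf
  induction n with
  | zero => simp [(Gamma_pos_of_pos hx).ne', (Gamma_pos_of_pos hy).ne']
  | succ k ih =>
    rw [ratio_succ hx, ratio_succ hy]
    have := Gamma_pos_of_pos hx
    have := Gamma_pos_of_pos (show 0 < k + x by positivity)
    gcongr

/-- The coefficient of `((x - 1) / 2) ^ s * ((x + 1) / 2) ^ (n - s)` in `jacobiP α β n x`. -/
def jacobiCoeff (α β : ℝ) (n s : ℕ) : ℝ :=
  Gamma (n + α + 1) / (Gamma (α + s + 1) * (n - s).factorial) *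
    (Gamma (n + β + 1) / (Gamma (n + β - s + 1) * s.factorial))

lemma jacobiCoeff_succ_mul {α β : ℝ} (hα : -1 < α) (hβ : -1 < β) {n s : ℕ} (hs : s < n) :
    jacobiCoeff α β n (s + 1) * ((s + 1) * (s + 1 + α)) =
      jacobiCoeff α β n s * ((n - s) * (n - s + β)) := by
  obtain ⟨k, rfl⟩ : ∃ k, n = s + 1 + k := Nat.exists_eq_add_of_le hs
  have hαs : 0 < α + s + 1 := by linarith [s.cast_nonneg (α := ℝ)]
  have hβk : 0 < β + k + 1 := by linarith [k.cast_nonneg (α := ℝ)]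
  have hΓα : Gamma (α + (s + 1 : ℕ) + 1) = (α + s + 1) * Gamma (α + s + 1) := by
    rw [← Gamma_add_one hαs.ne']
    push_cast
    ring_nf
  have hΓβ : Gamma ((s + 1 + k : ℕ) + β - s + 1) = (β + k + 1) * Gamma (β + k + 1) := by
    rw [← Gamma_add_one hβk.ne']
    push_cast
    ring_nf
  have hΓβ' : Gamma ((s + 1 + k : ℕ) + β - (s + 1 : ℕ) + 1) = Gamma (β + k + 1) := by
    push_cast
    ring_nf
  have hΓα_ne := (Gamma_pos_of_pos hαs).ne'
  have hΓβ_ne := (Gamma_pos_of_pos hβk).ne'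
  rw [jacobiCoeff, jacobiCoeff, hΓα, hΓβ, hΓβ', show s + 1 + k - (s + 1) = k by lia,
    show s + 1 + k - s = k + 1 by lia, Nat.factorial_succ k, Nat.factorial_succ s]
  push_cast
  field_simp
  ring

lemma jacobiP_one (α : ℝ) {β : ℝ} (hβ : -1 < β) (n : ℕ) :
    jacobiP α β n 1 = Gamma (n + (α + 1)) / Gamma (α + 1) / n.factorial := by
  have hΓ : Gamma (n + (β + 1)) ≠ 0 :=
    (Gamma_pos_of_pos (by linarith [n.cast_nonneg (α := ℝ)])).ne'
  rw [jacobiP, Finset.sum_eq_single_of_mem 0 (by simp) (by simp +contextual)]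
  simp [hΓ, add_assoc, div_div]

lemma abs_jacobiP_neg_one {α β : ℝ} (hα : -1 < α) (hβ : -1 < β) (n : ℕ) :
    |jacobiP α β n (-1)| = Gamma (n + (β + 1)) / Gamma (β + 1) / n.factorial := by
  have hΓα : Gamma (α + (n + 1)) ≠ 0 :=
    (Gamma_pos_of_pos (by linarith [n.cast_nonneg (α := ℝ)])).ne'
  have hΓβ : 0 < Gamma (n + (β + 1)) :=
    Gamma_pos_of_pos (by linarith [n.cast_nonneg (α := ℝ)])
  have hΓβ' : 0 < Gamma (β + 1) := Gamma_pos_of_pos (by linarith)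
  have vanish : ∀ s ∈ Finset.range (n + 1), s ≠ n → n - s ≠ 0 := by
    simp only [Finset.mem_range]
    lia
  rw [jacobiP, Finset.sum_eq_single_of_mem n (by simp) fun s hs hsn => by simp [vanish s hs hsn]]
  norm_num [abs_mul, abs_div, add_comm (n : ℝ) α, hΓα, abs_of_pos, hΓβ, hΓβ', add_assoc, div_div]

lemma jacobiP_one_pos {α β : ℝ} (hα : -1 < α) (hβ : -1 < β) (n : ℕ) : 0 < jacobiP α β n 1 := by
  rw [jacobiP_one α hβ]
  have := Gamma_pos_of_pos (show 0 < α + 1 by linarith)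
  have := Gamma_pos_of_pos (show 0 < n + (α + 1) by linarith [n.cast_nonneg (α := ℝ)])
  positivity

lemma abs_jacobiP_neg_one_le {α β : ℝ} (hβ : -1 < β) (hβα : β ≤ α) (n : ℕ) :
    |jacobiP α β n (-1)| ≤ jacobiP α β n 1 := by
  rw [abs_jacobiP_neg_one (hβ.trans_le hβα) hβ, jacobiP_one α hβ]
  gcongr ?_ / _
  exact Gamma_natCast_add_div_Gamma_le (by linarith) (by linarith) n

section Polynomial

open Polynomial

/-- The polynomial whose evaluation is `jacobiP α β n`. -/
def jacobiPoly (α β : ℝ) (n : ℕ) : ℝ[X] :=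
  ∑ s ∈ Finset.range (n + 1), (jacobiCoeff α β n s / 2 ^ n) • ((X - 1) ^ s * (X + 1) ^ (n - s))

lemma eval_jacobiPoly (α β : ℝ) (n : ℕ) (x : ℝ) :
    (jacobiPoly α β n).eval x = jacobiP α β n x := by
  rw [jacobiPoly, jacobiP, eval_finsetSum]
  refine Finset.sum_congr rfl fun s hs => ?_
  have hpow : (2 : ℝ) ^ n = 2 ^ s * 2 ^ (n - s) := by
    rw [← pow_add, Nat.add_sub_cancel' (Finset.mem_range_succ_iff.mp hs)]
  simp only [jacobiCoeff, eval_smul, eval_mul, eval_pow, eval_sub, eval_add, eval_X, eval_one,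
    smul_eq_mul, div_pow, hpow]
  ring

/-- The differential operator `(1 - x²) ∂² + (β - α - (α + β + 2) x) ∂` on polynomials, whose
eigenfunctions are the Jacobi polynomials. -/
def jacobiOperator (α β : ℝ) : ℝ[X] →ₗ[ℝ] ℝ[X] :=
  LinearMap.mulLeft ℝ (1 - X ^ 2) ∘ₗ derivative ∘ₗ derivative +
    LinearMap.mulLeft ℝ (C (β - α) - C (α + β + 2) * X) ∘ₗ derivative

lemma eval_jacobiOperator (α β : ℝ) (p : ℝ[X]) (x : ℝ) :
    (jacobiOperator α β p).eval x =
      (1 - x ^ 2) * p.derivative.derivative.eval x +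
        (β - α - (α + β + 2) * x) * p.derivative.eval x := by
  simp [jacobiOperator]

lemma jacobiOperator_pow_mul_pow (α β : ℝ) (s m : ℕ) :
    jacobiOperator α β ((X - 1) ^ s * (X + 1) ^ m) =
      (2 * (m * (m + β))) • ((X - 1) ^ s * (X + 1) ^ (m - 1)) -
      (2 * (s * (s + α))) • ((X - 1) ^ (s - 1) * (X + 1) ^ m) -
      ((s + m) * (s + m + α + β + 1)) • ((X - 1) ^ s * (X + 1) ^ m) := by
  simp only [jacobiOperator, LinearMap.add_apply, LinearMap.comp_apply, LinearMap.mulLeft_apply,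
    smul_eq_C_mul]
  rcases s with _ | _ | s <;> rcases m with _ | _ | m <;>
    simp [derivative_pow, map_ofNat C 2] <;> ring

lemma jacobiOperator_jacobiPoly {α β : ℝ} (hα : -1 < α) (hβ : -1 < β) (n : ℕ) :
    jacobiOperator α β (jacobiPoly α β n) = -(n * (n + α + β + 1)) • jacobiPoly α β n := by
  have raise_eq_lower :
      ∑ s ∈ Finset.range (n + 1), (jacobiCoeff α β n s / 2 ^ n * (2 * ((n - s) * (n - s + β)))) •
        ((X - 1) ^ s * (X + 1) ^ (n - s - 1) : ℝ[X]) =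
      ∑ s ∈ Finset.range (n + 1), (jacobiCoeff α β n s / 2 ^ n * (2 * (s * (s + α)))) •
        ((X - 1) ^ (s - 1) * (X + 1) ^ (n - s) : ℝ[X]) := by
    rw [Finset.sum_range_succ, Finset.sum_range_succ']
    simp only [sub_self, CharP.cast_eq_zero, zero_mul, mul_zero, zero_smul, add_zero]
    refine Finset.sum_congr rfl fun s hs => ?_
    have := jacobiCoeff_succ_mul hα hβ (Finset.mem_range.mp hs)
    rw [Nat.sub_sub, add_tsub_cancel_right]
    congr 1
    push_cast
    linear_combination (-2 / 2 ^ n) * this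
  have term (s : ℕ) (hs : s ∈ Finset.range (n + 1)) :
      jacobiOperator α β ((jacobiCoeff α β n s / 2 ^ n) • ((X - 1) ^ s * (X + 1) ^ (n - s))) =
        (jacobiCoeff α β n s / 2 ^ n * (2 * ((n - s) * (n - s + β)))) •
          ((X - 1) ^ s * (X + 1) ^ (n - s - 1)) -
        (jacobiCoeff α β n s / 2 ^ n * (2 * (s * (s + α)))) •
          ((X - 1) ^ (s - 1) * (X + 1) ^ (n - s)) -
        (n * (n + α + β + 1)) •
          ((jacobiCoeff α β n s / 2 ^ n) • ((X - 1) ^ s * (X + 1) ^ (n - s))) := by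
    rw [map_smul, jacobiOperator_pow_mul_pow, Nat.cast_sub (Finset.mem_range_succ_iff.mp hs)]
    module
  rw [jacobiPoly, map_sum, Finset.sum_congr rfl term, Finset.sum_sub_distrib,
    Finset.sum_sub_distrib, raise_eq_lower, ← Finset.smul_sum]
  module

end Polynomial

section EigenPolynomial

open Polynomial

variable {α β μ : ℝ} {p : ℝ[X]}

lemma mul_sq_eval_add_le_max (hα : -1 / 2 ≤ α) (hβ : -1 / 2 ≤ β)
    (hp : jacobiOperator α β p = -μ • p) {x : ℝ} (hx : x ∈ Set.Icc (-1) 1) :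
    μ * p.eval x ^ 2 + (1 - x ^ 2) * p.derivative.eval x ^ 2 ≤
      max (μ * p.eval (-1) ^ 2) (μ * p.eval 1 ^ 2) := by
  set G : ℝ → ℝ := fun y => μ * p.eval y ^ 2 + (1 - y ^ 2) * p.derivative.eval y ^ 2 with hG
  have hG' (y : ℝ) :
      HasDerivAt G (2 * p.derivative.eval y ^ 2 * (α - β + (α + β + 1) * y)) y := by
    have ode := congrArg (eval y) hp
    rw [eval_jacobiOperator, eval_smul, smul_eq_mul] at ode
    have h := (((p.hasDerivAt y).pow 2).const_mul μ).add
      ((((hasDerivAt_id y).pow 2).const_sub 1).mul ((p.derivative.hasDerivAt y).pow 2))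
    refine h.congr_deriv ?_
    simp only [Pi.pow_apply, id]
    linear_combination 2 * p.derivative.eval y * ode
  have hGcont : Continuous G := continuous_iff_continuousAt.mpr fun y => (hG' y).continuousAt
  have endpoint (e : ℝ) (he : e ^ 2 = 1) : G e = μ * p.eval e ^ 2 := by simp [hG, he]
  rw [← endpoint (-1) (by norm_num), ← endpoint 1 (by norm_num)]
  -- `G'` has the sign of a nondecreasing affine function, so `G` is largest at an endpoint.
  rcases le_total 0 (α - β + (α + β + 1) * x) with hsign | hsign
  · refine le_max_of_le_right (?_ : G x ≤ G 1)
    refine monotoneOn_of_hasDerivWithinAt_nonneg (convex_Icc x 1) hGcont.continuousOn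
      (fun y _ => (hG' y).hasDerivWithinAt) (fun y hy => ?_) ⟨le_rfl, hx.2⟩ ⟨hx.2, le_rfl⟩ hx.2
    rw [interior_Icc] at hy
    exact mul_nonneg (by positivity) (by nlinarith [hy.1])
  · refine le_max_of_le_left (?_ : G x ≤ G (-1))
    refine antitoneOn_of_hasDerivWithinAt_nonpos (convex_Icc (-1) x) hGcont.continuousOn
      (fun y _ => (hG' y).hasDerivWithinAt) (fun y hy => ?_) ⟨le_rfl, hx.1⟩ ⟨hx.1, le_rfl⟩ hx.1
    rw [interior_Icc] at hy
    exact mul_nonpos_of_nonneg_of_nonpos (by positivity) (by nlinarith [hy.2])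

end EigenPolynomial

lemma sonin_antitoneOn {D : Set ℝ} (hD : Convex ℝ D) {u u' φ φ' : ℝ → ℝ}
    (hu : ∀ x ∈ D, HasDerivAt u (u' x) x) (hu' : ∀ x ∈ D, HasDerivAt u' (-(φ x * u x)) x)
    (hφ : ∀ x ∈ D, HasDerivAt φ (φ' x) x) (hφ_pos : ∀ x ∈ D, 0 < φ x)
    (hφ'_nonneg : ∀ x ∈ D, 0 ≤ φ' x) :
    AntitoneOn (fun x => u x ^ 2 + u' x ^ 2 / φ x) D := by
  have hderiv (x : ℝ) (hx : x ∈ D) :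
      HasDerivAt (fun x => u x ^ 2 + u' x ^ 2 / φ x) (-((u' x / φ x) ^ 2 * φ' x)) x := by
    have hne := (hφ_pos x hx).ne'
    refine (((hu x hx).pow 2).add (((hu' x hx).pow 2).div (hφ x hx) hne)).congr_deriv ?_
    simp only [Pi.pow_apply]
    field_simp
    ring
  refine antitoneOn_of_hasDerivWithinAt_nonpos hD
    (fun x hx => (hderiv x hx).continuousAt.continuousWithinAt)
    (fun x hx => (hderiv x (interior_subset hx)).hasDerivWithinAt) fun x hx => ?_
  have := hφ'_nonneg x (interior_subset hx)
  exact neg_nonpos.mpr (by positivity)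

section LiouvilleForm

open Polynomial

variable {α β μ a b ψ : ℝ} {p : ℝ[X]}

lemma sin_pos_of_mem_Ioo_pi_div_two (hψ : ψ ∈ Set.Ioo 0 (π / 2)) : 0 < sin ψ :=
  sin_pos_of_pos_of_lt_pi hψ.1 (by linarith [hψ.2, pi_pos])

lemma cos_pos_of_mem_Ioo_pi_div_two (hψ : ψ ∈ Set.Ioo 0 (π / 2)) : 0 < cos ψ :=
  cos_pos_of_mem_Ioo ⟨by linarith [hψ.1, pi_pos], hψ.2⟩

/-- With `x = cos (2 * ψ)` this is, up to a constant factor, the square root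
`(1 - x) ^ (a / 2) * (1 + x) ^ (b / 2)` of a Jacobi weight. Halving the angle of the usual
substitution keeps half-angles out of the computations. -/
def angularWeight (a b ψ : ℝ) : ℝ := sin ψ ^ a * cos ψ ^ b

lemma angularWeight_pos (a b : ℝ) (hψ : ψ ∈ Set.Ioo 0 (π / 2)) : 0 < angularWeight a b ψ :=
  mul_pos (rpow_pos_of_pos (sin_pos_of_mem_Ioo_pi_div_two hψ) a)
    (rpow_pos_of_pos (cos_pos_of_mem_Ioo_pi_div_two hψ) b)

lemma angularWeight_le_rpow_sin (hb : 0 ≤ b) (hψ : ψ ∈ Set.Ioo 0 (π / 2)) :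
    angularWeight a b ψ ≤ sin ψ ^ a :=
  mul_le_of_le_one_right (rpow_nonneg (sin_pos_of_mem_Ioo_pi_div_two hψ).le a)
    (rpow_le_one (cos_pos_of_mem_Ioo_pi_div_two hψ).le (cos_le_one ψ) hb)

lemma rpow_half_sin_two_mul_le_angularWeight (hba : b ≤ a) (hψ : ψ ∈ Set.Ioo 0 (π / 2)) :
    (sin (2 * ψ) / 2) ^ a ≤ angularWeight a b ψ := by
  have hs := sin_pos_of_mem_Ioo_pi_div_two hψ
  have hc := cos_pos_of_mem_Ioo_pi_div_two hψ
  calc (sin (2 * ψ) / 2) ^ a = sin ψ ^ a * cos ψ ^ a := by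
        rw [← mul_rpow hs.le hc.le, sin_two_mul]
        ring_nf
    _ ≤ sin ψ ^ a * cos ψ ^ b :=
        mul_le_mul_of_nonneg_left (rpow_le_rpow_of_exponent_ge hc (cos_le_one ψ) hba)
          (rpow_nonneg hs.le a)

lemma hasDerivAt_angularWeight_mul {g : ℝ → ℝ} {g' : ℝ} (hψ : ψ ∈ Set.Ioo 0 (π / 2))
    (hg : HasDerivAt g g' ψ) :
    HasDerivAt (fun ψ => angularWeight a b ψ * g ψ)
      (angularWeight a b ψ * ((a * (cos ψ / sin ψ) - b * (sin ψ / cos ψ)) * g ψ + g')) ψ := by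
  have hs := (sin_pos_of_mem_Ioo_pi_div_two hψ).ne'
  have hc := (cos_pos_of_mem_Ioo_pi_div_two hψ).ne'
  refine ((((hasDerivAt_sin ψ).rpow_const (p := a) (.inl hs)).mul
    ((hasDerivAt_cos ψ).rpow_const (p := b) (.inl hc))).mul hg).congr_deriv ?_
  rw [rpow_sub_one hs, rpow_sub_one hc, angularWeight]
  simp only [Pi.mul_apply]
  field_simp
  ring

/-- The Liouville transform of `p` for the Jacobi operator with parameters `α`, `β`, in the variable
`ψ` with `x = cos (2 * ψ)`. -/
def jacobiLiouville (α β : ℝ) (p : ℝ[X]) (ψ : ℝ) : ℝ :=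
  angularWeight (α + 1 / 2) (β + 1 / 2) ψ * p.eval (cos (2 * ψ))

/-- The logarithmic derivative of the weight in `jacobiLiouville`. -/
def jacobiLogDeriv (α β ψ : ℝ) : ℝ :=
  (α + 1 / 2) * (cos ψ / sin ψ) - (β + 1 / 2) * (sin ψ / cos ψ)

/-- The derivative of `jacobiLiouville α β p`. -/
def jacobiLiouvilleDeriv (α β : ℝ) (p : ℝ[X]) (ψ : ℝ) : ℝ :=
  angularWeight (α + 1 / 2) (β + 1 / 2) ψ *
    (jacobiLogDeriv α β ψ * p.eval (cos (2 * ψ)) -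
      2 * sin (2 * ψ) * p.derivative.eval (cos (2 * ψ)))

/-- The potential `φ` for which Liouville transforms of solutions of `jacobiOperator α β p = -μ • p`
satisfy `u'' + φ u = 0`. -/
def jacobiPotential (α β μ ψ : ℝ) : ℝ :=
  4 * μ + (α + β + 1) ^ 2 + (1 / 4 - α ^ 2) / sin ψ ^ 2 + (1 / 4 - β ^ 2) / cos ψ ^ 2

lemma hasDerivAt_eval_cos_two_mul (p : ℝ[X]) (ψ : ℝ) :
    HasDerivAt (fun ψ => p.eval (cos (2 * ψ)))
      (-(2 * sin (2 * ψ) * p.derivative.eval (cos (2 * ψ)))) ψ := by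
  refine ((p.hasDerivAt _).comp ψ ((hasDerivAt_id ψ).const_mul 2).cos).congr_deriv ?_
  simp only [id]
  ring

lemma hasDerivAt_jacobiLogDeriv (hψ : ψ ∈ Set.Ioo 0 (π / 2)) :
    HasDerivAt (jacobiLogDeriv α β)
      (-((α + 1 / 2) / sin ψ ^ 2) - (β + 1 / 2) / cos ψ ^ 2) ψ := by
  have hs := (sin_pos_of_mem_Ioo_pi_div_two hψ).ne'
  have hc := (cos_pos_of_mem_Ioo_pi_div_two hψ).ne'
  refine ((((hasDerivAt_cos ψ).div (hasDerivAt_sin ψ) hs).const_mul (α + 1 / 2)).sub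
    (((hasDerivAt_sin ψ).div (hasDerivAt_cos ψ) hc).const_mul (β + 1 / 2))).congr_deriv ?_
  field_simp
  linear_combination (-(cos ψ ^ 2 * (2 * α + 1)) - sin ψ ^ 2 * (2 * β + 1)) * sin_sq_add_cos_sq ψ

lemma hasDerivAt_jacobiLiouville (hψ : ψ ∈ Set.Ioo 0 (π / 2)) :
    HasDerivAt (jacobiLiouville α β p) (jacobiLiouvilleDeriv α β p ψ) ψ :=
  hasDerivAt_angularWeight_mul hψ (hasDerivAt_eval_cos_two_mul p ψ)

lemma jacobiLogDeriv_riccati (μ : ℝ) (hψ : ψ ∈ Set.Ioo 0 (π / 2)) :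
    jacobiLogDeriv α β ψ ^ 2 - (α + 1 / 2) / sin ψ ^ 2 - (β + 1 / 2) / cos ψ ^ 2 =
      4 * μ - jacobiPotential α β μ ψ := by
  have hs := (sin_pos_of_mem_Ioo_pi_div_two hψ).ne'
  have hc := (cos_pos_of_mem_Ioo_pi_div_two hψ).ne'
  rw [jacobiLogDeriv, jacobiPotential]
  field_simp
  rw [cos_sq' ψ]
  ring

lemma jacobiLogDeriv_mul_sin_two_mul (hψ : ψ ∈ Set.Ioo 0 (π / 2)) :
    jacobiLogDeriv α β ψ * sin (2 * ψ) = α - β + (α + β + 1) * cos (2 * ψ) := by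
  have hs := (sin_pos_of_mem_Ioo_pi_div_two hψ).ne'
  have hc := (cos_pos_of_mem_Ioo_pi_div_two hψ).ne'
  rw [jacobiLogDeriv, sin_two_mul, cos_two_mul]
  field_simp
  rw [sin_sq ψ]
  ring

lemma hasDerivAt_jacobiLiouvilleDeriv (hp : jacobiOperator α β p = -μ • p)
    (hψ : ψ ∈ Set.Ioo 0 (π / 2)) :
    HasDerivAt (jacobiLiouvilleDeriv α β p)
      (-(jacobiPotential α β μ ψ * jacobiLiouville α β p ψ)) ψ := by
  have hsin : HasDerivAt (fun ψ => 2 * sin (2 * ψ)) (4 * cos (2 * ψ)) ψ := by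
    refine (((hasDerivAt_id ψ).const_mul 2).sin.const_mul 2).congr_deriv ?_
    simp only [id]
    ring
  have hinner := ((hasDerivAt_jacobiLogDeriv (α := α) (β := β) hψ).mul
    (hasDerivAt_eval_cos_two_mul p ψ)).sub (hsin.mul (hasDerivAt_eval_cos_two_mul p.derivative ψ))
  refine (hasDerivAt_angularWeight_mul hψ hinner).congr_deriv ?_
  have ode := congrArg (eval (cos (2 * ψ))) hp
  rw [eval_jacobiOperator, eval_smul, smul_eq_mul, ← sin_sq] at ode
  have riccati := jacobiLogDeriv_riccati (α := α) (β := β) μ hψ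
  have cross := jacobiLogDeriv_mul_sin_two_mul (α := α) (β := β) hψ
  rw [jacobiLiouville, ← jacobiLogDeriv]
  simp only [Pi.sub_apply, Pi.mul_apply]
  linear_combination angularWeight (α + 1 / 2) (β + 1 / 2) ψ *
    (p.eval (cos (2 * ψ)) * riccati - 4 * p.derivative.eval (cos (2 * ψ)) * cross + 4 * ode)

lemma hasDerivAt_jacobiPotential (hψ : ψ ∈ Set.Ioo 0 (π / 2)) :
    HasDerivAt (jacobiPotential α β μ)
      (2 * (α ^ 2 - 1 / 4) * cos ψ / sin ψ ^ 3 + 2 * (1 / 4 - β ^ 2) * sin ψ / cos ψ ^ 3) ψ := by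
  have hs := (sin_pos_of_mem_Ioo_pi_div_two hψ).ne'
  have hc := (cos_pos_of_mem_Ioo_pi_div_two hψ).ne'
  refine (((((hasDerivAt_sin ψ).pow 2).fun_inv (pow_ne_zero 2 hs)).const_mul
    (1 / 4 - α ^ 2)).const_add (4 * μ + (α + β + 1) ^ 2) |>.add
    ((((hasDerivAt_cos ψ).pow 2).fun_inv (pow_ne_zero 2 hc)).const_mul
    (1 / 4 - β ^ 2))).congr_deriv ?_
  simp only [Pi.pow_apply]
  field_simp
  ring

lemma deriv_jacobiPotential_nonneg (hα : 1 / 2 ≤ α) (hβ : |β| ≤ 1 / 2)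
    (hψ : ψ ∈ Set.Ioo 0 (π / 2)) : 0 ≤ deriv (jacobiPotential α β μ) ψ := by
  rw [(hasDerivAt_jacobiPotential hψ).deriv]
  have hα2 : 0 ≤ α ^ 2 - 1 / 4 := by nlinarith
  have hβ2 : 0 ≤ 1 / 4 - β ^ 2 := by nlinarith [abs_le.mp hβ]
  have hs := sin_pos_of_mem_Ioo_pi_div_two hψ
  have hc := cos_pos_of_mem_Ioo_pi_div_two hψ
  positivity

lemma monotoneOn_jacobiPotential (hα : 1 / 2 ≤ α) (hβ : |β| ≤ 1 / 2) :
    MonotoneOn (jacobiPotential α β μ) (Set.Ioo 0 (π / 2)) := by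
  have hdiff (y : ℝ) (hy : y ∈ Set.Ioo 0 (π / 2)) :
      DifferentiableAt ℝ (jacobiPotential α β μ) y :=
    (hasDerivAt_jacobiPotential hy).differentiableAt
  exact monotoneOn_of_deriv_nonneg (convex_Ioo 0 (π / 2))
    (fun y hy => (hdiff y hy).continuousAt.continuousWithinAt)
    (fun y hy => (hdiff y (interior_subset hy)).differentiableWithinAt)
    fun y hy => deriv_jacobiPotential_nonneg hα hβ (interior_subset hy)

lemma jacobiLiouville_sq_le {ψ₀ : ℝ} (hα : 1 / 2 ≤ α) (hβ : |β| ≤ 1 / 2)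
    (hp : jacobiOperator α β p = -μ • p) (hψ₀ : 0 < ψ₀) (hψ₀ψ : ψ₀ ≤ ψ) (hψ : ψ < π / 2)
    (hφ : 0 < jacobiPotential α β μ ψ₀) :
    jacobiLiouville α β p ψ ^ 2 ≤ jacobiLiouville α β p ψ₀ ^ 2 +
      jacobiLiouvilleDeriv α β p ψ₀ ^ 2 / jacobiPotential α β μ ψ₀ := by
  have mem_Ioo {y : ℝ} (hy : y ∈ Set.Icc ψ₀ ψ) : y ∈ Set.Ioo 0 (π / 2) :=
    ⟨hψ₀.trans_le hy.1, hy.2.trans_lt hψ⟩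
  have hφ_pos (y : ℝ) (hy : y ∈ Set.Icc ψ₀ ψ) : 0 < jacobiPotential α β μ y :=
    hφ.trans_le <|
      monotoneOn_jacobiPotential hα hβ (mem_Ioo ⟨le_rfl, hψ₀ψ⟩) (mem_Ioo hy) hy.1
  have amplitude_antitone := sonin_antitoneOn (convex_Icc ψ₀ ψ)
    (fun y hy => hasDerivAt_jacobiLiouville (mem_Ioo hy))
    (fun y hy => hasDerivAt_jacobiLiouvilleDeriv hp (mem_Ioo hy))
    (fun y hy => (hasDerivAt_jacobiPotential (mem_Ioo hy)).differentiableAt.hasDerivAt) hφ_pos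
    (fun y hy => deriv_jacobiPotential_nonneg hα hβ (mem_Ioo hy))
  refine le_trans ?_ (amplitude_antitone ⟨le_rfl, hψ₀ψ⟩ ⟨hψ₀ψ, le_rfl⟩ hψ₀ψ)
  have := hφ_pos ψ ⟨hψ₀ψ, le_rfl⟩
  exact le_add_of_nonneg_right (by positivity)

end LiouvilleForm

section JacobiBounds

open Polynomial

variable {α β ψ x : ℝ} {n : ℕ}

lemma mul_sq_jacobiP_add_le (hβ : -1 / 2 ≤ β) (hβα : β ≤ α) (n : ℕ)
    (hx : x ∈ Set.Icc (-1) 1) :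
    n * (n + α + β + 1) * jacobiP α β n x ^ 2 +
        (1 - x ^ 2) * (jacobiPoly α β n).derivative.eval x ^ 2 ≤
      n * (n + α + β + 1) * jacobiP α β n 1 ^ 2 := by
  have h := mul_sq_eval_add_le_max (hβ.trans hβα) hβ
    (jacobiOperator_jacobiPoly (by linarith) (by linarith) n) hx
  simp only [eval_jacobiPoly] at h
  refine h.trans (max_le ?_ le_rfl)
  have hμ : 0 ≤ n + α + β + 1 := by linarith [n.cast_nonneg (α := ℝ)]
  gcongr ?_ * ?_
  rw [sq_le_sq]
  exact (abs_jacobiP_neg_one_le (by linarith) hβα n).trans (le_abs_self _)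

lemma abs_jacobiP_le_jacobiP_one (hβ : -1 / 2 ≤ β) (hβα : β ≤ α) (n : ℕ)
    (hx : x ∈ Set.Icc (-1) 1) : |jacobiP α β n x| ≤ jacobiP α β n 1 := by
  have hpos : 0 < jacobiP α β n 1 := jacobiP_one_pos (by linarith) (by linarith) n
  rcases n.eq_zero_or_pos with rfl | hn
  · rw [← abs_of_pos hpos]
    simp [jacobiP]
  · have hμ : 0 < n * (n + α + β + 1) := by
      have : (1 : ℝ) ≤ n := mod_cast hn
      exact mul_pos (by linarith) (by linarith)
    refine abs_le_of_sq_le_sq ((mul_le_mul_iff_right₀ hμ).mp ?_) hpos.le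
    refine le_trans (le_add_of_nonneg_right ?_) (mul_sq_jacobiP_add_le hβ hβα n hx)
    exact mul_nonneg (by nlinarith [hx.1, hx.2]) (sq_nonneg _)

lemma abs_jacobiPi_le_one (hβ : -1 / 2 ≤ β) (hβα : β ≤ α) (n : ℕ) (hx : x ∈ Set.Icc (-1) 1) :
    |jacobiPi α β n x| ≤ 1 := by
  have hpos : 0 < jacobiP α β n 1 := jacobiP_one_pos (by linarith) (by linarith) n
  rw [jacobiPi, abs_div, abs_of_pos hpos, div_le_one hpos]
  exact abs_jacobiP_le_jacobiP_one hβ hβα n hx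

lemma three_mul_sq_le_jacobiPotential (hα : 0 ≤ α) (hβ : |β| ≤ 1 / 2)
    (hψ : ψ ∈ Set.Ioo 0 (π / 2)) (hn : α ≤ n * sin ψ) :
    3 * (n : ℝ) ^ 2 ≤ jacobiPotential α β (n * (n + α + β + 1)) ψ := by
  have hs := sin_pos_of_mem_Ioo_pi_div_two hψ
  obtain ⟨hβl, hβu⟩ := abs_le.mp hβ
  have hsin : -(n : ℝ) ^ 2 ≤ (1 / 4 - α ^ 2) / sin ψ ^ 2 := by
    rw [le_div_iff₀ (by positivity)]
    nlinarith
  have hcos : 0 ≤ (1 / 4 - β ^ 2) / cos ψ ^ 2 := div_nonneg (by nlinarith) (sq_nonneg _)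
  have hμ : (n : ℝ) * n ≤ n * (n + α + β + 1) := by
    gcongr
    linarith
  rw [jacobiPotential]
  linarith [sq_nonneg (α + β + 1)]

lemma abs_jacobiLogDeriv_le (hα : 1 / 2 ≤ α) (hβ : |β| ≤ 1 / 2)
    (hψ : ψ ∈ Set.Ioo 0 (π / 2)) (hsc : sin ψ ≤ cos ψ) :
    |jacobiLogDeriv α β ψ| ≤ 2 * α / sin ψ := by
  have hs := sin_pos_of_mem_Ioo_pi_div_two hψ
  have hc := cos_pos_of_mem_Ioo_pi_div_two hψ
  obtain ⟨hβl, hβu⟩ := abs_le.mp hβ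
  refine abs_sub_le_of_nonneg_of_le ?_ ?_ ?_ ?_
  · exact mul_nonneg (by linarith) (by positivity)
  · rw [← mul_div_assoc]
    gcongr ?_ / _
    nlinarith [cos_le_one ψ]
  · exact mul_nonneg (by linarith) (by positivity)
  · calc (β + 1 / 2) * (sin ψ / cos ψ) ≤ 1 * 1 := by
          gcongr
          · linarith
          · exact (div_le_one hc).mpr hsc
      _ ≤ 2 * α / sin ψ := by
          rw [one_mul, one_le_div hs]
          linarith [sin_le_one ψ]

lemma jacobiLiouvilleDeriv_sq_le (hα : 1 / 2 ≤ α) (hβ : |β| ≤ 1 / 2)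
    (hψ : ψ ∈ Set.Ioo 0 (π / 2)) (hsc : sin ψ ≤ cos ψ) (hn : α ≤ n * sin ψ) :
    jacobiLiouvilleDeriv α β (jacobiPoly α β n) ψ ^ 2 ≤
      angularWeight (α + 1 / 2) (β + 1 / 2) ψ ^ 2 *
        (8 * (n * (n + α + β + 1) * jacobiP α β n 1 ^ 2)) := by
  have hs := sin_pos_of_mem_Ioo_pi_div_two hψ
  obtain ⟨hβl, hβu⟩ := abs_le.mp hβ
  have hA : jacobiLogDeriv α β ψ ^ 2 ≤ 4 * (n * (n + α + β + 1)) := by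
    have h : |jacobiLogDeriv α β ψ| ≤ 2 * n := by
      refine (abs_jacobiLogDeriv_le hα hβ hψ hsc).trans ?_
      rw [div_le_iff₀ hs]
      linarith
    have : jacobiLogDeriv α β ψ ^ 2 ≤ (2 * n) ^ 2 := sq_le_sq' (abs_le.mp h).1 (abs_le.mp h).2
    nlinarith [n.cast_nonneg (α := ℝ)]
  have hE := mul_sq_jacobiP_add_le (by linarith) (by linarith : β ≤ α) n (cos_mem_Icc (2 * ψ))
  rw [← sin_sq] at hE
  rw [jacobiLiouvilleDeriv, mul_pow, eval_jacobiPoly]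
  gcongr ?_ * ?_
  set P := jacobiP α β n (cos (2 * ψ))
  set P' := (jacobiPoly α β n).derivative.eval (cos (2 * ψ))
  calc (jacobiLogDeriv α β ψ * P - 2 * sin (2 * ψ) * P') ^ 2
      ≤ 2 * (jacobiLogDeriv α β ψ ^ 2 * P ^ 2 + 4 * (sin (2 * ψ) ^ 2 * P' ^ 2)) := by
        linarith [sq_nonneg (jacobiLogDeriv α β ψ * P + 2 * sin (2 * ψ) * P')]
    _ ≤ 2 * (4 * (n * (n + α + β + 1)) * P ^ 2 + 4 * (sin (2 * ψ) ^ 2 * P' ^ 2)) := by gcongr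
    _ ≤ 8 * (n * (n + α + β + 1) * jacobiP α β n 1 ^ 2) := by linarith

lemma jacobiLiouville_sq_add_le (hα : 1 / 2 ≤ α) (hβ : |β| ≤ 1 / 2)
    (hψ : ψ ∈ Set.Ioo 0 (π / 2)) (hsc : sin ψ ≤ cos ψ) (hnψ : α ≤ n * sin ψ) :
    jacobiLiouville α β (jacobiPoly α β n) ψ ^ 2 +
        jacobiLiouvilleDeriv α β (jacobiPoly α β n) ψ ^ 2 /
          jacobiPotential α β (n * (n + α + β + 1)) ψ ≤
      (3 * α + 8) * (angularWeight (α + 1 / 2) (β + 1 / 2) ψ * jacobiP α β n 1) ^ 2 := by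
  obtain ⟨hβl, hβu⟩ := abs_le.mp hβ
  have hn : (1 : ℝ) ≤ n := by
    refine mod_cast Nat.one_le_iff_ne_zero.mpr ?_
    rintro rfl
    norm_num at hnψ
    linarith
  have hφ := three_mul_sq_le_jacobiPotential (by linarith) hβ hψ hnψ
  set W := angularWeight (α + 1 / 2) (β + 1 / 2) ψ * jacobiP α β n 1 with hW
  have hu : jacobiLiouville α β (jacobiPoly α β n) ψ ^ 2 ≤ W ^ 2 := by
    have := abs_le.mp <| abs_jacobiP_le_jacobiP_one (by linarith) (by linarith : β ≤ α) n
      (cos_mem_Icc (2 * ψ))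
    rw [jacobiLiouville, eval_jacobiPoly, hW, mul_pow, mul_pow]
    exact mul_le_mul_of_nonneg_left (sq_le_sq' this.1 this.2) (sq_nonneg _)
  have hu' : jacobiLiouvilleDeriv α β (jacobiPoly α β n) ψ ^ 2 ≤
      (8 * α + 20) / 3 * W ^ 2 * (3 * n ^ 2) := by
    calc _ ≤ _ := jacobiLiouvilleDeriv_sq_le hα hβ hψ hsc hnψ
      _ = 8 * W ^ 2 * (n * (n + α + β + 1)) := by ring
      _ ≤ 8 * W ^ 2 * (n * (n * (α + 5 / 2))) := by
        gcongr
        nlinarith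
      _ = _ := by ring
  have hquot : jacobiLiouvilleDeriv α β (jacobiPoly α β n) ψ ^ 2 /
      jacobiPotential α β (n * (n + α + β + 1)) ψ ≤ (8 * α + 20) / 3 * W ^ 2 := by
    rw [div_le_iff₀ (by nlinarith)]
    refine hu'.trans ?_
    gcongr
  nlinarith [sq_nonneg W]

lemma abs_jacobiLiouville_le (hα : 1 / 2 ≤ α) (hβ : |β| ≤ 1 / 2) (hn : 2 * α ≤ n)
    (hψ : ψ ∈ Set.Ioo 0 (π / 2)) (hnψ : α ≤ n * sin ψ) :
    |jacobiLiouville α β (jacobiPoly α β n) ψ| ≤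
      √(3 * α + 8) * ((α / n) ^ (α + 1 / 2) * jacobiP α β n 1) := by
  obtain ⟨hβl, -⟩ := abs_le.mp hβ
  have hn0 : (0 : ℝ) < n := by linarith
  have hr : 0 < α / n := by positivity
  have hr2 : α / n ≤ 1 / 2 := by
    rw [div_le_iff₀ hn0]
    linarith
  set ψ₀ := arcsin (α / n)
  have hsin : sin ψ₀ = α / n := sin_arcsin (by linarith) (by linarith)
  have hψ₀_pos : 0 < ψ₀ := arcsin_pos.mpr hr
  have hψ₀ψ : ψ₀ ≤ ψ := by
    rw [arcsin_le_iff_le_sin' ⟨by linarith [hψ.1, pi_pos], hψ.2⟩, div_le_iff₀ hn0]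
    linarith
  have hψ₀ : ψ₀ ∈ Set.Ioo 0 (π / 2) := ⟨hψ₀_pos, hψ₀ψ.trans_lt hψ.2⟩
  have hsc : sin ψ₀ ≤ cos ψ₀ := by
    nlinarith [sin_sq_add_cos_sq ψ₀, cos_pos_of_mem_Ioo_pi_div_two hψ₀]
  have hnψ₀ : α ≤ n * sin ψ₀ := by rw [hsin, mul_div_cancel₀ _ hn0.ne']
  have hφ : 0 < jacobiPotential α β (n * (n + α + β + 1)) ψ₀ :=
    lt_of_lt_of_le (by positivity) (three_mul_sq_le_jacobiPotential (by linarith) hβ hψ₀ hnψ₀)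
  have hsq := (jacobiLiouville_sq_le hα hβ (jacobiOperator_jacobiPoly (by linarith) (by linarith) n)
    hψ₀_pos hψ₀ψ hψ.2 hφ).trans (jacobiLiouville_sq_add_le hα hβ hψ₀ hsc hnψ₀)
  have hc : 0 < jacobiP α β n 1 := jacobiP_one_pos (by linarith) (by linarith) n
  have hw := angularWeight_pos (α + 1 / 2) (β + 1 / 2) hψ₀
  refine (abs_le_sqrt hsq).trans ?_
  rw [sqrt_mul (by linarith), sqrt_sq (by positivity)]
  gcongr
  rw [← hsin]
  exact angularWeight_le_rpow_sin (by linarith) hψ₀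

lemma half_arccos_mem_Ioo (hx : |x| < 1) : arccos x / 2 ∈ Set.Ioo 0 (π / 2) :=
  ⟨half_pos (arccos_pos.mpr (abs_lt.mp hx).2), by linarith [arccos_lt_pi.mpr (abs_lt.mp hx).1]⟩

lemma arccos_abs_div_pi_le (x : ℝ) : arccos |x| / π ≤ sin (arccos x) / 2 := by
  have h := mul_le_sin (arccos_nonneg |x|) (arccos_le_pi_div_two.mpr (abs_nonneg x))
  rw [sin_arccos, sq_abs, ← sin_arccos] at h
  linarith [div_mul_eq_mul_div 2 π (arccos |x|), mul_div_assoc 2 (arccos |x|) π]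

lemma arccos_abs_div_pi_le_sin_half (x : ℝ) : arccos |x| / π ≤ sin (arccos x / 2) := by
  have hs : 0 ≤ sin (arccos x / 2) :=
    sin_nonneg_of_nonneg_of_le_pi (by linarith [arccos_nonneg x])
      (by linarith [arccos_nonneg x, arccos_le_pi x])
  calc arccos |x| / π ≤ sin (2 * (arccos x / 2)) / 2 := by
        rw [mul_div_cancel₀ _ two_ne_zero]
        exact arccos_abs_div_pi_le x
    _ = sin (arccos x / 2) * cos (arccos x / 2) := by
        rw [sin_two_mul]
        ring
    _ ≤ sin (arccos x / 2) := mul_le_of_le_one_right hs (cos_le_one _)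

lemma rpow_mul_abs_eval_le_abs_jacobiLiouville (hα : -1 / 2 ≤ α) (hβα : β ≤ α) (p : ℝ[X])
    (hx : |x| < 1) :
    (arccos |x| / π) ^ (α + 1 / 2) * |p.eval x| ≤ |jacobiLiouville α β p (arccos x / 2)| := by
  obtain ⟨hxl, hxu⟩ := abs_lt.mp hx
  have hψ := half_arccos_mem_Ioo hx
  have hweight := rpow_half_sin_two_mul_le_angularWeight (add_le_add_left hβα (1 / 2)) hψ
  rw [mul_div_cancel₀ _ two_ne_zero] at hweight
  rw [jacobiLiouville, mul_div_cancel₀ _ two_ne_zero, cos_arccos hxl.le hxu.le, abs_mul,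
    abs_of_pos (angularWeight_pos _ _ hψ)]
  gcongr
  have hϑ : 0 ≤ arccos |x| / π := div_nonneg (arccos_nonneg _) pi_pos.le
  exact (rpow_le_rpow hϑ (arccos_abs_div_pi_le x) (by linarith)).trans hweight

lemma abs_jacobiLiouville_half_arccos_le (hα : 1 / 2 ≤ α) (hβ : |β| ≤ 1 / 2) (hx : |x| < 1)
    (hlarge : π * α ≤ n * arccos |x|) :
    |jacobiLiouville α β (jacobiPoly α β n) (arccos x / 2)| ≤
      √(3 * α + 8) * ((α / n) ^ (α + 1 / 2) * jacobiP α β n 1) := by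
  have hπ := pi_pos
  have hn : 2 * α ≤ n := by
    have := arccos_le_pi_div_two.mpr (abs_nonneg x)
    nlinarith [mul_le_mul_of_nonneg_left this n.cast_nonneg]
  refine abs_jacobiLiouville_le hα hβ hn (half_arccos_mem_Ioo hx) ?_
  calc α ≤ n * (arccos |x| / π) := by rwa [← mul_div_assoc, le_div_iff₀' hπ]
    _ ≤ n * sin (arccos x / 2) := by
      gcongr
      exact arccos_abs_div_pi_le_sin_half x

lemma rpow_mul_abs_jacobiPi_le (hα : 1 / 2 ≤ α) (hβ : |β| ≤ 1 / 2) (n : ℕ) (hx : |x| < 1) :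
    (n * arccos |x|) ^ (α + 1 / 2) * |jacobiPi α β n x| ≤
      (π * α) ^ (α + 1 / 2) * √(3 * α + 8) := by
  obtain ⟨hβl, hβu⟩ := abs_le.mp hβ
  obtain ⟨hxl, hxu⟩ := abs_lt.mp hx
  have hϑ := arccos_nonneg |x|
  rcases le_total (n * arccos |x|) (π * α) with hsmall | hlarge
  · have h1 : |jacobiPi α β n x| ≤ 1 :=
      abs_jacobiPi_le_one (by linarith) (by linarith) n ⟨hxl.le, hxu.le⟩
    gcongr
    exact h1.trans (one_le_sqrt.mpr (by linarith))
  have hn0 : (0 : ℝ) < n := pos_of_mul_pos_left (lt_of_lt_of_le (by positivity) hlarge) hϑ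
  have hc : 0 < jacobiP α β n 1 := jacobiP_one_pos (by linarith) (by linarith) n
  rw [jacobiPi, abs_div, abs_of_pos hc, ← mul_div_assoc, div_le_iff₀ hc, ← eval_jacobiPoly α β n x]
  calc (n * arccos |x|) ^ (α + 1 / 2) * |(jacobiPoly α β n).eval x|
      = (n * π) ^ (α + 1 / 2) * ((arccos |x| / π) ^ (α + 1 / 2) *
          |(jacobiPoly α β n).eval x|) := by
        rw [← mul_assoc, ← mul_rpow (by positivity) (by positivity)]
        field_simp
    _ ≤ (n * π) ^ (α + 1 / 2) * (√(3 * α + 8) * ((α / n) ^ (α + 1 / 2) * jacobiP α β n 1)) := by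
        refine mul_le_mul_of_nonneg_left ?_ (by positivity)
        exact (rpow_mul_abs_eval_le_abs_jacobiLiouville (by linarith) (by linarith) _ hx).trans
          (abs_jacobiLiouville_half_arccos_le hα hβ hx hlarge)
    _ = (n * π * (α / n)) ^ (α + 1 / 2) * √(3 * α + 8) * jacobiP α β n 1 := by
        rw [mul_rpow (x := n * π) (y := α / n) (by positivity) (by positivity)]
        ring
    _ = (π * α) ^ (α + 1 / 2) * √(3 * α + 8) * jacobiP α β n 1 := by field_simp

theorem jacobi_polynomial_uniform_bounds_general (hα : 1 / 2 ≤ α) (hβ : |β| ≤ 1 / 2) :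
    ∃ C : ℝ, 0 < C ∧ ∀ n : ℕ, 1 ≤ n → ∀ x ∈ Set.Icc (-1 : ℝ) 1, |jacobiPi α β n x| ≤ 1 ∧
      (|x| < 1 → |jacobiPi α β n x| ≤
        C * arccos |x| ^ (-α - 1 / 2) * (n : ℝ) ^ (-α - 1 / 2)) := by
  obtain ⟨hβl, hβu⟩ := abs_le.mp hβ
  refine ⟨(π * α) ^ (α + 1 / 2) * √(3 * α + 8), by positivity, fun n hn x hx =>
    ⟨abs_jacobiPi_le_one (by linarith) (by linarith) n hx, fun hx1 => ?_⟩⟩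
  have hn0 : (0 : ℝ) < n := mod_cast hn
  have hϑ : 0 < arccos |x| := arccos_pos.mpr hx1
  have hexp : -α - 1 / 2 = -(α + 1 / 2) := by ring
  rw [mul_assoc, ← mul_rpow hϑ.le hn0.le, mul_comm (arccos |x|), hexp, rpow_neg (by positivity),
    ← div_eq_mul_inv, le_div_iff₀' (by positivity)]
  exact rpow_mul_abs_jacobiPi_le hα hβ n hx1

end JacobiBounds

/-- Uniform bounds on the normalized Jacobi polynomials over the support of the
orthogonality measure. -/
theorem jacobi_polynomial_uniform_bounds
    (d : ℕ) (hd : 1 ≤ d) :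
    ∃ C₁ C₂ : ℝ, 0 < C₁ ∧ 0 < C₂ ∧ ∀ n : ℕ, 1 ≤ n → ∀ l : ℝ, l ∈ Set.Icc (-1 : ℝ) 1 →
      (|l| ≤ 1 - 1 / (n : ℝ) ^ 2 →
        |jacobiPi ((d : ℝ) / 2) 0 n l| ≤
          C₁ * Real.arccos |l| ^ (-(d : ℝ) / 2 - 1 / 2) * (n : ℝ) ^ (-(d : ℝ) / 2 - 1 / 2)) ∧
      (1 - 1 / (n : ℝ) ^ 2 < |l| → |jacobiPi ((d : ℝ) / 2) 0 n l| ≤ C₂) := by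
  have hd' : (1 : ℝ) ≤ d := mod_cast hd
  obtain ⟨C, hC, h⟩ := jacobi_polynomial_uniform_bounds_general (α := d / 2) (β := 0)
    (by linarith) (by norm_num)
  refine ⟨C, 1, hC, one_pos, fun n hn l hl => ⟨fun hl' => ?_, fun _ => (h n hn l hl).1⟩⟩
  have hn0 : (0 : ℝ) < 1 / (n : ℝ) ^ 2 := by positivity
  rw [neg_div]
  exact (h n hn l hl).2 (by linarith)
end
end
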